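/- Let H₁ and H₂ be finite-dimensional Hilbert spaces and K an invertible matrix on H₁ ⊗ H₂. Let p, q, r, s be real parameters with 1 ≤ p ≤ 2, −1 ≤ q < 0, −1 ≤ r < 0, 1 + q + r > 0, p + q + r > 0, and 1/(p+q+r) ≤ s ≤ 1/(1+q+r). For A positive definite on H₁ ⊗ H₂ and B positive definite on H₂, define Q(A,B) := inf_C Tr[(A^{p/2} K (I₁ ⊗ B^{q/2} C^r B^{q/2}) K† A^{p/2})^s], the infimum taken over all positive definite density matrices C on H₂. Then Q is jointly convex: for all positive definite A₀, A₁ on H₁ ⊗ H₂, all positive definite B₀, B₁ on H₂, and all t ∈ [0,1], Q(t·A₀+(1−t)·A₁, t·B₀+(1−t)·B₁) ≤ t·Q(A₀,B₀) + (1−t)·Q(A₁,B₁). -/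

import Mathlib

open scoped Kronecker ComplexOrder
open Matrix

/-- Real power of a (Hermitian, in practice positive semidefinite) matrix, defined spectrally:
positive eigenvalues are raised to the power `t`, zero (and negative) eigenvalues are sent to `0`. -/
noncomputable def matPow {n : Type*} [Fintype n] [DecidableEq n]
    (M : Matrix n n ℂ) (t : ℝ) : Matrix n n ℂ :=
  if hM : M.IsHermitian then
    (hM.eigenvectorUnitary : Matrix n n ℂ) *
      Matrix.diagonal (fun i =>
        ((if 0 < hM.eigenvalues i then (hM.eigenvalues i) ^ t else 0 : ℝ) : ℂ)) *
      (star (hM.eigenvectorUnitary : Matrix n n ℂ))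
  else 0

/-- Partial trace over the first tensor factor. -/
noncomputable def ptraceFst {m n : Type*} [Fintype m] [Fintype n]
    (M : Matrix (m × n) (m × n) ℂ) : Matrix n n ℂ :=
  Matrix.of fun j j' => ∑ i, M (i, j) (i, j')

/-- Partial trace over the second tensor factor. -/
noncomputable def ptraceSnd {m n : Type*} [Fintype m] [Fintype n]
    (M : Matrix (m × n) (m × n) ℂ) : Matrix m m ℂ :=
  Matrix.of fun i i' => ∑ j, M (i, j) (i', j)

/-- A density matrix: positive semidefinite with unit trace. -/
def IsDensity {n : Type*} [Fintype n] [DecidableEq n] (ρ : Matrix n n ℂ) : Prop :=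
  ρ.PosSemidef ∧ ρ.trace = 1

/-- The optimized trace functional of Statement 2:
`Q(A,B) = inf_C Tr[(A^{p/2} K (I₁ ⊗ B^{q/2} C^r B^{q/2}) K† A^{p/2})^s]`,
the infimum over all positive definite density matrices `C` on `H₂`. -/
noncomputable def Qinf {n₁ n₂ : Type*} [Fintype n₁] [DecidableEq n₁]
    [Fintype n₂] [DecidableEq n₂] (K : Matrix (n₁ × n₂) (n₁ × n₂) ℂ) (p q r s : ℝ)
    (A : Matrix (n₁ × n₂) (n₁ × n₂) ℂ) (B : Matrix n₂ n₂ ℂ) : ℝ :=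
  sInf {x | ∃ C : Matrix n₂ n₂ ℂ, C.PosDef ∧ C.trace = 1 ∧
    x = (Matrix.trace (matPow
      (matPow A (p / 2) * K *
        ((1 : Matrix n₁ n₁ ℂ) ⊗ₖ (matPow B (q / 2) * matPow C r * matPow B (q / 2))) *
        Kᴴ * matPow A (p / 2)) s)).re}

section Basics

variable {m n : Type*} [Fintype m] [DecidableEq m] [Fintype n] [DecidableEq n]

/-- real trace of a power -/
noncomputable def trp (M : Matrix n n ℂ) (t : ℝ) : ℝ := (Matrix.trace (matPow M t)).re

/-- real diagonal -/
noncomputable def dg (d : n → ℝ) : Matrix n n ℂ := Matrix.diagonal (fun i => ((d i : ℝ) : ℂ))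

theorem isHermitian_conj (U : Matrix n n ℂ) (d : n → ℝ) : (U * dg d * Uᴴ).IsHermitian := by
  unfold Matrix.IsHermitian
  rw [Matrix.conjTranspose_mul, Matrix.conjTranspose_mul, Matrix.conjTranspose_conjTranspose, dg,
    Matrix.diagonal_conjTranspose, Matrix.mul_assoc]
  congr 3
  ext i; simp

theorem matPow_conj {U : Matrix n n ℂ} (h1 : Uᴴ * U = 1) {d : n → ℝ} (hd : ∀ i, 0 < d i) (t : ℝ) :
    matPow (U * dg d * Uᴴ) t = U * dg (fun i => d i ^ t) * Uᴴ := by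
  have h2 : U * Uᴴ = 1 := mul_eq_one_comm.mp h1
  set M := U * dg d * Uᴴ with hM
  have hH : M.IsHermitian := isHermitian_conj U d
  unfold matPow
  rw [dif_pos hH]
  set V : Matrix n n ℂ := (hH.eigenvectorUnitary : Matrix n n ℂ) with hV
  have hV1 : Vᴴ * V = 1 := by
    have := Unitary.coe_star_mul_self hH.eigenvectorUnitary
    simpa [Matrix.star_eq_conjTranspose] using this
  have hV2 : V * Vᴴ = 1 := mul_eq_one_comm.mp hV1
  have hsp : M = V * dg hH.eigenvalues * Vᴴ := by
    have := hH.spectral_theorem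
    rw [Unitary.conjStarAlgAut_apply] at this
    exact this
  have key : dg hH.eigenvalues * (Vᴴ * U) = (Vᴴ * U) * dg d := by
    have this : Vᴴ * (V * dg hH.eigenvalues * Vᴴ) * U = Vᴴ * (U * dg d * Uᴴ) * U := by rw [← hsp]
    calc dg hH.eigenvalues * (Vᴴ * U) = (Vᴴ * V) * dg hH.eigenvalues * Vᴴ * U := by
          rw [hV1, Matrix.one_mul, Matrix.mul_assoc]
      _ = Vᴴ * (V * dg hH.eigenvalues * Vᴴ) * U := by simp only [Matrix.mul_assoc]
      _ = _ := this
      _ = Vᴴ * U * dg d * (Uᴴ * U) := by simp only [Matrix.mul_assoc]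
      _ = _ := by rw [h1, Matrix.mul_one]
  have key2 : Matrix.diagonal (fun i => ((if 0 < hH.eigenvalues i then (hH.eigenvalues i) ^ t else 0 : ℝ) : ℂ)) * (Vᴴ * U) = (Vᴴ * U) * dg (fun i => d i ^ t) := by
    ext i j
    have := congrFun (congrFun key i) j
    simp only [dg, Matrix.diagonal_mul, Matrix.mul_diagonal] at this ⊢
    by_cases hx : (Vᴴ * U) i j = 0
    · simp [hx]
    · have h3 : (hH.eigenvalues i : ℂ) = d j := by
        rw [mul_comm] at this
        exact mul_left_cancel₀ hx this
      have h4 : hH.eigenvalues i = d j := by exact_mod_cast h3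
      rw [h4, if_pos (hd j), mul_comm]
  calc _ = V * (Matrix.diagonal (fun i => ((if 0 < hH.eigenvalues i then (hH.eigenvalues i) ^ t else 0 : ℝ) : ℂ)) * (Vᴴ * U)) * Uᴴ := by
        simp only [Matrix.mul_assoc, h2, Matrix.mul_one, Matrix.star_eq_conjTranspose]
    _ = (V * Vᴴ) * U * dg (fun i => d i ^ t) * Uᴴ := by rw [key2]; simp only [Matrix.mul_assoc]
    _ = _ := by rw [hV2, Matrix.one_mul]

theorem posDef_conj {U : Matrix n n ℂ} (h1 : Uᴴ * U = 1) {d : n → ℝ} (hd : ∀ i, 0 < d i) :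
    (U * dg d * Uᴴ).PosDef := by
  have h2 : U * Uᴴ = 1 := mul_eq_one_comm.mp h1
  have hU : IsUnit U := IsUnit.of_mul_eq_one _ h2
  rw [← Matrix.star_eq_conjTranspose, Matrix.IsUnit.posDef_star_right_conjugate_iff hU]
  apply Matrix.PosDef.diagonal
  intro i
  exact_mod_cast hd i

theorem exists_conj {M : Matrix n n ℂ} (hM : M.PosDef) :
    ∃ (U : Matrix n n ℂ) (d : n → ℝ), Uᴴ * U = 1 ∧ U * Uᴴ = 1 ∧ (∀ i, 0 < d i) ∧ M = U * dg d * Uᴴ := by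
  have h1 : (hM.1.eigenvectorUnitary : Matrix n n ℂ)ᴴ * (hM.1.eigenvectorUnitary : Matrix n n ℂ) = 1 := by
    have := Unitary.coe_star_mul_self hM.1.eigenvectorUnitary
    simpa [Matrix.star_eq_conjTranspose] using this
  refine ⟨hM.1.eigenvectorUnitary, hM.1.eigenvalues, h1, mul_eq_one_comm.mp h1, hM.eigenvalues_pos, ?_⟩
  have := hM.1.spectral_theorem
  rw [Unitary.conjStarAlgAut_apply] at this
  exact this

theorem dg_mul (d e : n → ℝ) : dg d * dg e = dg (fun i => d i * e i) := by
  simp [dg, Matrix.diagonal_mul_diagonal]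

theorem dg_one : dg (fun _ : n => (1 : ℝ)) = 1 := by simp [dg]

theorem matPow_posDef {M : Matrix n n ℂ} (hM : M.PosDef) (t : ℝ) : (matPow M t).PosDef := by
  obtain ⟨U, d, h1, h2, hd, rfl⟩ := exists_conj hM
  rw [matPow_conj h1 hd]
  exact posDef_conj h1 (fun i => Real.rpow_pos_of_pos (hd i) t)

theorem matPow_mul {M : Matrix n n ℂ} (hM : M.PosDef) (s t : ℝ) :
    matPow M s * matPow M t = matPow M (s + t) := by
  obtain ⟨U, d, h1, h2, hd, rfl⟩ := exists_conj hM
  rw [matPow_conj h1 hd, matPow_conj h1 hd, matPow_conj h1 hd]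
  calc _ = U * (dg (fun i => d i ^ s) * (Uᴴ * U) * dg (fun i => d i ^ t)) * Uᴴ := by
        simp only [Matrix.mul_assoc]
    _ = _ := by
        rw [h1, Matrix.mul_one, dg_mul]
        simp only [Real.rpow_add (hd _)]

theorem matPow_zero {M : Matrix n n ℂ} (hM : M.PosDef) : matPow M 0 = 1 := by
  obtain ⟨U, d, h1, h2, hd, rfl⟩ := exists_conj hM
  rw [matPow_conj h1 hd]
  simp only [Real.rpow_zero, dg_one, Matrix.mul_one, h2]

theorem matPow_one {M : Matrix n n ℂ} (hM : M.PosDef) : matPow M 1 = M := by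
  obtain ⟨U, d, h1, h2, hd, rfl⟩ := exists_conj hM
  rw [matPow_conj h1 hd]
  simp only [Real.rpow_one]

theorem matPow_matPow {M : Matrix n n ℂ} (hM : M.PosDef) (s t : ℝ) :
    matPow (matPow M s) t = matPow M (s * t) := by
  obtain ⟨U, d, h1, h2, hd, rfl⟩ := exists_conj hM
  rw [matPow_conj h1 hd, matPow_conj h1 (fun i => Real.rpow_pos_of_pos (hd i) s), matPow_conj h1 hd]
  simp only [Real.rpow_mul (hd _).le]

theorem matPow_neg_mul {M : Matrix n n ℂ} (hM : M.PosDef) (s : ℝ) :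
    matPow M (-s) * matPow M s = 1 := by
  rw [matPow_mul hM]; simp [matPow_zero hM]

theorem matPow_mul_neg {M : Matrix n n ℂ} (hM : M.PosDef) (s : ℝ) :
    matPow M s * matPow M (-s) = 1 := by
  rw [matPow_mul hM]; simp [matPow_zero hM]

theorem matPow_herm {M : Matrix n n ℂ} (hM : M.PosDef) (t : ℝ) : (matPow M t)ᴴ = matPow M t :=
  (matPow_posDef hM t).1

theorem matPow_half {M : Matrix n n ℂ} (hM : M.PosDef) (t : ℝ) :
    matPow M (t/2) * matPow M (t/2) = matPow M t := by
  rw [matPow_mul hM]; congr 1; ring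

theorem matPow_smul {M : Matrix n n ℂ} (hM : M.PosDef) {c : ℝ} (hc : 0 < c) (t : ℝ) :
    matPow (c • M) t = (c ^ t) • matPow M t := by
  obtain ⟨U, d, h1, h2, hd, rfl⟩ := exists_conj hM
  have e : ∀ (c : ℝ) (d : n → ℝ), c • (U * dg d * Uᴴ) = U * dg (fun i => c * d i) * Uᴴ := by
    intro c d
    have : dg (fun i => c * d i) = c • dg d := by
      ext i j
      by_cases h : i = j
      · subst h; simp [dg]
      · simp [dg, h]
    rw [this, Matrix.mul_smul, Matrix.smul_mul]
  rw [e, matPow_conj h1 (fun i => mul_pos hc (hd i)), matPow_conj h1 hd, e]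
  simp only [Real.mul_rpow hc.le (hd _).le]

theorem matPow_unitary_conj {M : Matrix n n ℂ} (hM : M.PosDef) {V : Matrix n n ℂ} (hV : Vᴴ * V = 1)
    (t : ℝ) : matPow (V * M * Vᴴ) t = V * matPow M t * Vᴴ := by
  obtain ⟨U, d, h1, h2, hd, rfl⟩ := exists_conj hM
  have h3 : (V * U)ᴴ * (V * U) = 1 := by
    rw [Matrix.conjTranspose_mul]
    calc _ = Uᴴ * (Vᴴ * V) * U := by simp only [Matrix.mul_assoc]
      _ = 1 := by rw [hV, Matrix.mul_one, h1]
  have e : ∀ d : n → ℝ, V * (U * dg d * Uᴴ) * Vᴴ = (V * U) * dg d * (V * U)ᴴ := by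
    intro d; rw [Matrix.conjTranspose_mul]; simp only [Matrix.mul_assoc]
  rw [e, matPow_conj h3 hd, matPow_conj h1 hd, e]

theorem matPow_dg {d : n → ℝ} (hd : ∀ i, 0 < d i) (t : ℝ) : matPow (dg d) t = dg (fun i => d i ^ t) := by
  have := matPow_conj (U := (1 : Matrix n n ℂ)) (by simp) hd t
  simpa using this

theorem trp_eq {M : Matrix n n ℂ} (hM : M.IsHermitian) (hp : M.PosDef) (t : ℝ) :
    trp M t = ∑ i, (hM.eigenvalues i) ^ t := by
  unfold trp matPow
  rw [dif_pos hM, Matrix.trace_mul_comm, ← Matrix.mul_assoc, Unitary.coe_star_mul_self, Matrix.one_mul,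
    Matrix.trace_diagonal, Complex.re_sum]
  refine Finset.sum_congr rfl fun i _ => ?_
  have : 0 < hM.eigenvalues i := hp.eigenvalues_pos i
  rw [if_pos this, Complex.ofReal_re]

theorem trp_charpoly {M N : Matrix n n ℂ} (hM : M.PosDef) (hN : N.PosDef)
    (h : M.charpoly = N.charpoly) (t : ℝ) : trp M t = trp N t := by
  rw [trp_eq hM.1 hM, trp_eq hN.1 hN, (Matrix.IsHermitian.eigenvalues_eq_eigenvalues_iff hM.1 hN.1).mpr h]

theorem trp_comm {X Y : Matrix n n ℂ} (h1 : (X * Y).PosDef) (h2 : (Y * X).PosDef) (t : ℝ) :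
    trp (X * Y) t = trp (Y * X) t :=
  trp_charpoly h1 h2 (Matrix.charpoly_mul_comm _ _) t

theorem trp_pos {M : Matrix n n ℂ} (hM : M.PosDef) (t : ℝ) : 0 ≤ trp M t := by
  rw [trp_eq hM.1 hM]
  exact Finset.sum_nonneg fun i _ => Real.rpow_nonneg (hM.eigenvalues_pos i).le _

theorem trp_smul {M : Matrix n n ℂ} (hM : M.PosDef) {c : ℝ} (hc : 0 < c) (t : ℝ) :
    trp (c • M) t = c ^ t * trp M t := by
  unfold trp
  rw [matPow_smul hM hc, Matrix.trace_smul, Complex.smul_re, smul_eq_mul]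

theorem trp_matPow {M : Matrix n n ℂ} (hM : M.PosDef) (s t : ℝ) :
    trp (matPow M s) t = trp M (s * t) := by
  unfold trp; rw [matPow_matPow hM]

theorem posDef_comb {A B : Matrix n n ℂ} (hA : A.PosDef) (hB : B.PosDef) {x y : ℝ} (hx : 0 ≤ x) (hy : 0 ≤ y)
    (hxy : x + y = 1) : (x • A + y • B).PosDef := by
  rcases hx.eq_or_lt with rfl | hx
  · have : y = 1 := by linarith
    subst this; simpa using hB
  · refine Matrix.PosDef.add_posSemidef (hA.smul hx) (hB.posSemidef.smul hy)

theorem posDef_mul_mul {A : Matrix n n ℂ} (hA : A.PosDef) {X : Matrix n n ℂ} (hX : IsUnit X) :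
    (X * A * Xᴴ).PosDef := by
  rw [← Matrix.star_eq_conjTranspose, Matrix.IsUnit.posDef_star_right_conjugate_iff hX]
  exact hA

theorem posDef_mul_mul' {A : Matrix n n ℂ} (hA : A.PosDef) {X : Matrix n n ℂ} (hX : IsUnit X) :
    (Xᴴ * A * X).PosDef := by
  rw [← Matrix.star_eq_conjTranspose, Matrix.IsUnit.posDef_star_left_conjugate_iff hX]
  exact hA

theorem posDef_sandwich {A B : Matrix n n ℂ} (hA : A.PosDef) (hB : B.PosDef) (t : ℝ) :
    (matPow A t * B * matPow A t).PosDef := by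
  have := posDef_mul_mul hB (matPow_posDef hA t).isUnit
  rwa [matPow_herm hA] at this

/-- eigen-unitary weights -/
noncomputable def wt {A : Matrix m m ℂ} {B : Matrix n n ℂ} (hA : A.PosDef) (hB : B.PosDef)
    (K : Matrix m n ℂ) (i : m) (j : n) : ℝ :=
  Complex.normSq (((hA.1.eigenvectorUnitary : Matrix m m ℂ)ᴴ * K * (hB.1.eigenvectorUnitary : Matrix n n ℂ)) i j)

theorem wt_nonneg {A : Matrix m m ℂ} {B : Matrix n n ℂ} (hA : A.PosDef) (hB : B.PosDef)
    (K : Matrix m n ℂ) (i : m) (j : n) : 0 ≤ wt hA hB K i j := Complex.normSq_nonneg _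

theorem trace_dg_sum (k : Matrix m n ℂ) (f : m → ℝ) (g : n → ℝ) :
    (Matrix.trace (kᴴ * dg f * k * dg g)).re = ∑ i, ∑ j, Complex.normSq (k i j) * (f i * g j) := by
  rw [Finset.sum_comm]
  simp only [Matrix.trace, Matrix.diag, dg, Matrix.mul_diagonal, Complex.re_sum]
  refine Finset.sum_congr rfl fun j _ => ?_
  rw [Matrix.mul_apply, Finset.sum_mul, Complex.re_sum]
  refine Finset.sum_congr rfl fun i _ => ?_
  rw [Matrix.mul_diagonal, Matrix.conjTranspose_apply]
  simp [Complex.normSq_apply]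
  ring

theorem matPow_eig {A : Matrix m m ℂ} (hA : A.PosDef) (p : ℝ) :
    matPow A p = (hA.1.eigenvectorUnitary : Matrix m m ℂ) * dg (fun i => hA.1.eigenvalues i ^ p) * (hA.1.eigenvectorUnitary : Matrix m m ℂ)ᴴ := by
  unfold matPow
  rw [dif_pos hA.1]
  unfold dg
  simp only [hA.eigenvalues_pos, if_true, Matrix.star_eq_conjTranspose]

theorem trace_pow_sum {A : Matrix m m ℂ} {B : Matrix n n ℂ} (hA : A.PosDef) (hB : B.PosDef)
    (K : Matrix m n ℂ) (p q : ℝ) :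
    (Matrix.trace (Kᴴ * matPow A p * K * matPow B q)).re =
      ∑ i, ∑ j, wt hA hB K i j * (hA.1.eigenvalues i ^ p * hB.1.eigenvalues j ^ q) := by
  unfold wt
  rw [← trace_dg_sum, matPow_eig hA, matPow_eig hB]
  set U := (hA.1.eigenvectorUnitary : Matrix m m ℂ)
  set V := (hB.1.eigenvectorUnitary : Matrix n n ℂ)
  rw [Matrix.conjTranspose_mul, Matrix.conjTranspose_mul, Matrix.conjTranspose_conjTranspose]
  congr 1
  simp only [Matrix.mul_assoc]
  rw [Matrix.trace_mul_comm Vᴴ]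
  simp only [Matrix.mul_assoc]

end Basics

set_option linter.unusedSectionVars false

section Klein

variable {m n : Type*} [Fintype m] [DecidableEq m] [Fintype n] [DecidableEq n]

/-- real part of the trace -/
noncomputable def rt {n : Type*} [Fintype n] (M : Matrix n n ℂ) : ℝ := (Matrix.trace M).re

theorem rt_add (M N : Matrix n n ℂ) : rt (M + N) = rt M + rt N := by
  simp [rt, Matrix.trace_add]

theorem rt_smul (c : ℝ) (M : Matrix n n ℂ) : rt (c • M) = c * rt M := by
  simp [rt, Matrix.trace_smul]

theorem rt_comm (M : Matrix m n ℂ) (N : Matrix n m ℂ) : rt (M * N) = rt (N * M) := by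
  simp [rt, Matrix.trace_mul_comm M N]

theorem rt_pow_sum {A : Matrix m m ℂ} {B : Matrix n n ℂ} (hA : A.PosDef) (hB : B.PosDef)
    (K : Matrix m n ℂ) (p q : ℝ) :
    rt (Kᴴ * matPow A p * K * matPow B q) =
      ∑ i, ∑ j, wt hA hB K i j * (hA.1.eigenvalues i ^ p * hB.1.eigenvalues j ^ q) :=
  trace_pow_sum hA hB K p q

theorem trp_eq_rt (A : Matrix n n ℂ) (p : ℝ) : trp A p = rt (matPow A p) := rfl

theorem trp_one {A : Matrix n n ℂ} (hA : A.PosDef) : trp A 1 = rt A := by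
  rw [trp_eq_rt, matPow_one hA]

theorem klein {A B : Matrix n n ℂ} (hA : A.PosDef) (hB : B.PosDef) (c1 e1 f1 c2 e2 f2 c3 e3 f3 : ℝ)
    (h : ∀ u v : ℝ, 0 < u → 0 < v →
      0 ≤ c1 * (u ^ e1 * v ^ f1) + c2 * (u ^ e2 * v ^ f2) + c3 * (u ^ e3 * v ^ f3)) :
    0 ≤ c1 * rt (matPow A e1 * matPow B f1) + c2 * rt (matPow A e2 * matPow B f2)
      + c3 * rt (matPow A e3 * matPow B f3) := by
  have key : ∀ e f, rt (matPow A e * matPow B f) =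
      ∑ i, ∑ j, wt hA hB (1 : Matrix n n ℂ) i j * (hA.1.eigenvalues i ^ e * hB.1.eigenvalues j ^ f) := by
    intro e f
    rw [← rt_pow_sum hA hB]; simp
  simp only [key, Finset.mul_sum, ← Finset.sum_add_distrib]
  refine Finset.sum_nonneg fun i _ => Finset.sum_nonneg fun j _ => ?_
  have := mul_nonneg (wt_nonneg hA hB (1 : Matrix n n ℂ) i j)
    (h _ _ (hA.eigenvalues_pos i) (hB.eigenvalues_pos j))
  linarith

theorem young_ge {P V : Matrix n n ℂ} (hP : P.PosDef) (hV : V.PosDef) {β : ℝ} (hβ : 1 ≤ β) :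
    β * rt (P * matPow V (1 - 1/β)) ≤ trp P β + (β - 1) * rt V := by
  have := klein hP hV (-β) 1 (1-1/β) 1 β 0 (β-1) 0 1 (by
    intro u v hu hv
    have hb : 0 < β := by linarith
    have h1 : (0:ℝ) ≤ 1 - 1/β := by
      rw [sub_nonneg, div_le_one hb]; exact hβ
    have := Real.geom_mean_le_arith_mean2_weighted (w₁ := 1/β) (w₂ := 1 - 1/β) (p₁ := u^β) (p₂ := v)
      (by positivity) h1 (by positivity) hv.le (by ring)
    rw [← Real.rpow_mul hu.le, mul_one_div_cancel hb.ne', Real.rpow_one] at this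
    have h2 := mul_le_mul_of_nonneg_left this hb.le
    have h3 : β * (1/β * u^β + (1-1/β)*v) = u^β + (β-1)*v := by field_simp
    rw [h3] at h2
    simp only [Real.rpow_one, Real.rpow_zero]
    linarith)
  rw [matPow_one hP, matPow_one hV, matPow_zero hP, matPow_zero hV, Matrix.mul_one, Matrix.one_mul] at this
  rw [trp_eq_rt]
  linarith

theorem young_le {P V : Matrix n n ℂ} (hP : P.PosDef) (hV : V.PosDef) {α : ℝ} (hα : 0 < α) (hα1 : α ≤ 1) :
    trp P α ≤ α * rt (P * matPow V (1 - 1/α)) + (1 - α) * rt V := by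
  have := klein hP hV α 1 (1-1/α) (-1) α 0 (1-α) 0 1 (by
    intro u v hu hv
    have := Real.geom_mean_le_arith_mean2_weighted (w₁ := α) (w₂ := 1 - α) (p₁ := u * v^(1-1/α)) (p₂ := v)
      hα.le (by linarith) (by positivity) hv.le (by ring)
    rw [Real.mul_rpow hu.le (by positivity), ← Real.rpow_mul hv.le, mul_assoc, ← Real.rpow_add hv] at this
    have e : (1 - 1/α) * α + (1 - α) = 0 := by field_simp; ring
    rw [e] at this
    simp only [Real.rpow_one, Real.rpow_zero] at this ⊢
    linarith)
  rw [matPow_one hP, matPow_one hV, matPow_zero hP, matPow_zero hV, Matrix.mul_one, Matrix.one_mul] at this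
  rw [trp_eq_rt]
  linarith

theorem young_eq {P : Matrix n n ℂ} (hP : P.PosDef) {β : ℝ} (hβ : β ≠ 0) :
    rt (P * matPow (matPow P β) (1 - 1/β)) = trp P β := by
  rw [matPow_matPow hP, trp_eq_rt]
  nth_rewrite 1 [← matPow_one hP]
  rw [matPow_mul hP]
  congr 2
  field_simp; ring

/-- parallel-sum type functional -/
noncomputable def rho {A : Matrix m m ℂ} {B : Matrix n n ℂ} (hA : A.PosDef) (hB : B.PosDef)
    (K : Matrix m n ℂ) (t : ℝ) : ℝ :=
  ∑ i, ∑ j, wt hA hB K i j * (hA.1.eigenvalues i * hB.1.eigenvalues j /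
    (hA.1.eigenvalues i + t * hB.1.eigenvalues j))

theorem rt_sum1 {A : Matrix m m ℂ} {B : Matrix n n ℂ} (hA : A.PosDef) (hB : B.PosDef)
    (K : Matrix m n ℂ) : rt (Kᴴ * A * K) = ∑ i, ∑ j, wt hA hB K i j * hA.1.eigenvalues i := by
  have := rt_pow_sum hA hB K 1 0
  simpa [matPow_one hA, matPow_zero hB] using this

theorem rt_sum2 {A : Matrix m m ℂ} {B : Matrix n n ℂ} (hA : A.PosDef) (hB : B.PosDef)
    (K : Matrix m n ℂ) : rt (Kᴴ * K * B) = ∑ i, ∑ j, wt hA hB K i j * hB.1.eigenvalues j := by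
  have := rt_pow_sum hA hB K 0 1
  simpa [matPow_one hB, matPow_zero hA] using this

theorem scal_par (a b t : ℝ) (ha : 0 < a) (hb : 0 < b) (ht : 0 < t) (k x : ℂ) :
    Complex.normSq k * (a * b / (a + t * b)) ≤
      (1/t) * (Complex.normSq x * a) + Complex.normSq (k - x) * b := by
  have hab : 0 < a + t * b := by positivity
  have key : ∀ u v : ℝ, u * u * (a * b / (a + t * b)) ≤ (1/t) * (v * v * a) + (u - v) * (u-v) * b := by
    intro u v
    have : (1/t) * (v * v * a) + (u - v) * (u-v) * b - u * u * (a * b / (a + t * b)) =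
      ((a + t*b) * v - t * b * u)^2 / (t * (a + t * b)) := by
      field_simp; ring
    have h2 : 0 ≤ ((a + t*b) * v - t * b * u)^2 / (t * (a + t * b)) := by positivity
    linarith
  have h1 := key k.re x.re
  have h2 := key k.im x.im
  simp only [Complex.normSq_apply, Complex.sub_re, Complex.sub_im]
  linarith

theorem rho_le {A : Matrix m m ℂ} {B : Matrix n n ℂ} (hA : A.PosDef) (hB : B.PosDef)
    (K X : Matrix m n ℂ) {t : ℝ} (ht : 0 < t) :
    rho hA hB K t ≤ (1/t) * rt (Xᴴ * A * X) + rt ((K - X)ᴴ * (K - X) * B) := by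
  rw [rt_sum1 hA hB, rt_sum2 hA hB, rho]
  simp only [Finset.mul_sum, ← Finset.sum_add_distrib]
  refine Finset.sum_le_sum fun i _ => Finset.sum_le_sum fun j _ => ?_
  have := scal_par _ _ t (hA.eigenvalues_pos i) (hB.eigenvalues_pos j) ht
    (((hA.1.eigenvectorUnitary : Matrix m m ℂ)ᴴ * K * (hB.1.eigenvectorUnitary : Matrix n n ℂ)) i j)
    (((hA.1.eigenvectorUnitary : Matrix m m ℂ)ᴴ * X * (hB.1.eigenvectorUnitary : Matrix n n ℂ)) i j)
  unfold wt
  rwa [Matrix.mul_sub, Matrix.sub_mul, Matrix.sub_apply]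

theorem rho_eq {A : Matrix m m ℂ} {B : Matrix n n ℂ} (hA : A.PosDef) (hB : B.PosDef)
    (K : Matrix m n ℂ) {t : ℝ} (ht : 0 < t) :
    ∃ X : Matrix m n ℂ, rho hA hB K t = (1/t) * rt (Xᴴ * A * X) + rt ((K - X)ᴴ * (K - X) * B) := by
  set U := (hA.1.eigenvectorUnitary : Matrix m m ℂ) with hU
  set V := (hB.1.eigenvectorUnitary : Matrix n n ℂ) with hV
  have hU1 : Uᴴ * U = 1 := by
    have := Unitary.coe_star_mul_self hA.1.eigenvectorUnitary
    simpa [Matrix.star_eq_conjTranspose] using this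
  have hV1 : Vᴴ * V = 1 := by
    have := Unitary.coe_star_mul_self hB.1.eigenvectorUnitary
    simpa [Matrix.star_eq_conjTranspose] using this
  set x : Matrix m n ℂ := Matrix.of fun i j => (Uᴴ * K * V) i j * ((t * hB.1.eigenvalues j /
    (hA.1.eigenvalues i + t * hB.1.eigenvalues j) : ℝ) : ℂ) with hx
  have hX : Uᴴ * (U * x * Vᴴ) * V = x := by
    calc _ = (Uᴴ * U) * x * (Vᴴ * V) := by simp only [Matrix.mul_assoc]
      _ = x := by rw [hU1, hV1]; simp
  refine ⟨U * x * Vᴴ, ?_⟩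
  rw [rt_sum1 hA hB, rt_sum2 hA hB, rho]
  simp only [Finset.mul_sum, ← Finset.sum_add_distrib]
  refine Finset.sum_congr rfl fun i _ => Finset.sum_congr rfl fun j _ => ?_
  unfold wt
  rw [← hU, ← hV, Matrix.mul_sub, Matrix.sub_mul, Matrix.sub_apply, hX]
  have ha := hA.eigenvalues_pos i
  have hb := hB.eigenvalues_pos j
  simp only [hx, Matrix.of_apply]
  set k := (Uᴴ * K * V) i j
  set a := hA.1.eigenvalues i
  set b := hB.1.eigenvalues j
  have hab : 0 < a + t * b := by positivity
  have e : k - k * ((t * b / (a + t * b) : ℝ) : ℂ) = k * ((a / (a + t * b) : ℝ) : ℂ) := by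
    have : (a / (a + t * b) : ℝ) = 1 - (t * b / (a + t * b) : ℝ) := by field_simp; ring
    rw [this]; push_cast; ring
  rw [e, Complex.normSq_mul, Complex.normSq_mul, Complex.normSq_ofReal, Complex.normSq_ofReal]
  field_simp
  ring

theorem rho_concave {A₀ A₁ : Matrix m m ℂ} {B₀ B₁ : Matrix n n ℂ} (hA₀ : A₀.PosDef) (hA₁ : A₁.PosDef)
    (hB₀ : B₀.PosDef) (hB₁ : B₁.PosDef) (K : Matrix m n ℂ) {t : ℝ} (ht : 0 < t) {x y : ℝ}
    (hx : 0 ≤ x) (hy : 0 ≤ y) (hA : (x • A₀ + y • A₁).PosDef) (hB : (x • B₀ + y • B₁).PosDef) :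
    x * rho hA₀ hB₀ K t + y * rho hA₁ hB₁ K t ≤ rho hA hB K t := by
  obtain ⟨X, hX⟩ := rho_eq hA hB K ht
  have h0 := mul_le_mul_of_nonneg_left (rho_le hA₀ hB₀ K X ht) hx
  have h1 := mul_le_mul_of_nonneg_left (rho_le hA₁ hB₁ K X ht) hy
  rw [hX]
  simp only [Matrix.mul_add, Matrix.add_mul, Matrix.mul_smul, Matrix.smul_mul, rt_add, rt_smul]
  linarith

open MeasureTheory Set Real in
theorem lieb_int {A : Matrix m m ℂ} {B : Matrix n n ℂ} (hA : A.PosDef) (hB : B.PosDef)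
    (K : Matrix m n ℂ) {p : ℝ} (hp : p ∈ Ioo (0:ℝ) 1) :
    IntegrableOn (fun t => t ^ (p-1) * rho hA hB K t) (Ioi 0) ∧
    rt (Kᴴ * matPow A p * K * matPow B (1-p)) =
     (∫ t in Ioi 0, rpowIntegrand₀₁ p t 1)⁻¹ * ∫ t in Ioi 0, t ^ (p-1) * rho hA hB K t := by
  have e : EqOn (fun t => t ^ (p-1) * rho hA hB K t) (fun t => ∑ i, ∑ j, wt hA hB K i j *
      (hB.1.eigenvalues j * rpowIntegrand₀₁ p t (hA.1.eigenvalues i / hB.1.eigenvalues j))) (Ioi 0) := by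
    intro t ht
    have ht' : 0 < t := ht
    simp only [rho, Finset.mul_sum]
    refine Finset.sum_congr rfl fun i _ => Finset.sum_congr rfl fun j _ => ?_
    have ha := hA.eigenvalues_pos i
    have hb := hB.eigenvalues_pos j
    rw [rpowIntegrand₀₁_eq_pow_div hp ht'.le (by positivity)]
    have : hA.1.eigenvalues i + t * hB.1.eigenvalues j > 0 := by positivity
    field_simp
    ring
  have hI : ∀ i j, IntegrableOn (fun t => wt hA hB K i j *
      (hB.1.eigenvalues j * rpowIntegrand₀₁ p t (hA.1.eigenvalues i / hB.1.eigenvalues j))) (Ioi 0) := by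
    intro i j
    have ha := hA.eigenvalues_pos i
    have hb := hB.eigenvalues_pos j
    have := integrableOn_rpowIntegrand₀₁_Ioi hp (x := hA.1.eigenvalues i / hB.1.eigenvalues j) (by positivity)
    exact (this.const_mul _).const_mul _
  constructor
  · refine IntegrableOn.congr_fun ?_ e.symm measurableSet_Ioi
    exact integrable_finsetSum _ fun i _ => integrable_finsetSum _ fun j _ => hI i j
  · rw [setIntegral_congr_fun measurableSet_Ioi e, integral_finsetSum _ (fun i _ => integrable_finsetSum _ fun j _ => hI i j),
      rt_pow_sum hA hB, Finset.mul_sum]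
    refine Finset.sum_congr rfl fun i _ => ?_
    rw [integral_finsetSum _ (fun j _ => hI i j), Finset.mul_sum]
    refine Finset.sum_congr rfl fun j _ => ?_
    have ha := hA.eigenvalues_pos i
    have hb := hB.eigenvalues_pos j
    rw [integral_const_mul, integral_const_mul, show ∀ c w b I : ℝ, c * (w * (b * I)) = w * b * (c * I) from by intros; ring,
      ← rpow_eq_const_mul_integral hp (by positivity), div_rpow ha.le hb.le, rpow_sub hb, rpow_one]
    ring

open MeasureTheory Set Real in
theorem lieb {A₀ A₁ : Matrix m m ℂ} {B₀ B₁ : Matrix n n ℂ} (hA₀ : A₀.PosDef) (hA₁ : A₁.PosDef)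
    (hB₀ : B₀.PosDef) (hB₁ : B₁.PosDef) (K : Matrix m n ℂ) {p : ℝ} (hp : p ∈ Ioo (0:ℝ) 1) {x y : ℝ}
    (hx : 0 ≤ x) (hy : 0 ≤ y) (hxy : x + y = 1) :
    x * rt (Kᴴ * matPow A₀ p * K * matPow B₀ (1-p)) + y * rt (Kᴴ * matPow A₁ p * K * matPow B₁ (1-p)) ≤
      rt (Kᴴ * matPow (x • A₀ + y • A₁) p * K * matPow (x • B₀ + y • B₁) (1-p)) := by
  have hA := posDef_comb hA₀ hA₁ hx hy hxy
  have hB := posDef_comb hB₀ hB₁ hx hy hxy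
  obtain ⟨i0, e0⟩ := lieb_int hA₀ hB₀ K hp
  obtain ⟨i1, e1⟩ := lieb_int hA₁ hB₁ K hp
  obtain ⟨i, e⟩ := lieb_int hA hB K hp
  rw [e0, e1, e]
  have hc : 0 ≤ (∫ t in Ioi 0, rpowIntegrand₀₁ p t 1)⁻¹ := inv_nonneg.mpr (integral_rpowIntegrand₀₁_one_pos hp).le
  have : x * (∫ t in Ioi 0, t ^ (p-1) * rho hA₀ hB₀ K t) + y * (∫ t in Ioi 0, t ^ (p-1) * rho hA₁ hB₁ K t) ≤
     ∫ t in Ioi 0, t ^ (p-1) * rho hA hB K t := by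
    rw [← integral_const_mul, ← integral_const_mul, ← integral_add (i0.const_mul x) (i1.const_mul y)]
    refine setIntegral_mono_on ((i0.const_mul x).add (i1.const_mul y)) i measurableSet_Ioi ?_
    intro t ht
    have ht' : 0 < t := ht
    have := mul_le_mul_of_nonneg_left (rho_concave hA₀ hA₁ hB₀ hB₁ K ht' hx hy hA hB) (rpow_nonneg ht'.le (p-1))
    linarith
  have := mul_le_mul_of_nonneg_left this hc
  linarith

open MeasureTheory Set Real in
theorem ando_int {A : Matrix m m ℂ} {B : Matrix n n ℂ} (hA : A.PosDef) (hB : B.PosDef)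
    (K : Matrix m n ℂ) {p : ℝ} (hp : p ∈ Ioo (0:ℝ) 1) :
    IntegrableOn (fun t => t ^ (p-1) * (rt (Kᴴ * A * K) - t * rho hA hB K t)) (Ioi 0) ∧
    rt (Kᴴ * matPow A (1+p) * K * matPow B (-p)) =
     (∫ t in Ioi 0, rpowIntegrand₀₁ p t 1)⁻¹ * ∫ t in Ioi 0, t ^ (p-1) * (rt (Kᴴ * A * K) - t * rho hA hB K t) := by
  have e : EqOn (fun t => t ^ (p-1) * (rt (Kᴴ * A * K) - t * rho hA hB K t)) (fun t => ∑ i, ∑ j, wt hA hB K i j *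
      (hA.1.eigenvalues i * rpowIntegrand₀₁ p t (hA.1.eigenvalues i / hB.1.eigenvalues j))) (Ioi 0) := by
    intro t ht
    have ht' : 0 < t := ht
    simp only [rho, rt_sum1 hA hB, Finset.mul_sum, ← Finset.sum_sub_distrib]
    refine Finset.sum_congr rfl fun i _ => Finset.sum_congr rfl fun j _ => ?_
    have ha := hA.eigenvalues_pos i
    have hb := hB.eigenvalues_pos j
    rw [rpowIntegrand₀₁_eq_pow_div hp ht'.le (by positivity)]
    have : hA.1.eigenvalues i + t * hB.1.eigenvalues j > 0 := by positivity
    field_simp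
    ring
  have hI : ∀ i j, IntegrableOn (fun t => wt hA hB K i j *
      (hA.1.eigenvalues i * rpowIntegrand₀₁ p t (hA.1.eigenvalues i / hB.1.eigenvalues j))) (Ioi 0) := by
    intro i j
    have ha := hA.eigenvalues_pos i
    have hb := hB.eigenvalues_pos j
    have := integrableOn_rpowIntegrand₀₁_Ioi hp (x := hA.1.eigenvalues i / hB.1.eigenvalues j) (by positivity)
    exact (this.const_mul _).const_mul _
  constructor
  · refine IntegrableOn.congr_fun ?_ e.symm measurableSet_Ioi
    exact integrable_finsetSum _ fun i _ => integrable_finsetSum _ fun j _ => hI i j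
  · rw [setIntegral_congr_fun measurableSet_Ioi e, integral_finsetSum _ (fun i _ => integrable_finsetSum _ fun j _ => hI i j),
      rt_pow_sum hA hB, Finset.mul_sum]
    refine Finset.sum_congr rfl fun i _ => ?_
    rw [integral_finsetSum _ (fun j _ => hI i j), Finset.mul_sum]
    refine Finset.sum_congr rfl fun j _ => ?_
    have ha := hA.eigenvalues_pos i
    have hb := hB.eigenvalues_pos j
    rw [integral_const_mul, integral_const_mul, show ∀ c w b I : ℝ, c * (w * (b * I)) = w * b * (c * I) from by intros; ring,
      ← rpow_eq_const_mul_integral hp (by positivity), div_rpow ha.le hb.le, rpow_add ha, rpow_one, rpow_neg hb.le]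
    ring

open MeasureTheory Set Real in
theorem ando_Ioo {A₀ A₁ : Matrix m m ℂ} {B₀ B₁ : Matrix n n ℂ} (hA₀ : A₀.PosDef) (hA₁ : A₁.PosDef)
    (hB₀ : B₀.PosDef) (hB₁ : B₁.PosDef) (K : Matrix m n ℂ) {p : ℝ} (hp : p ∈ Ioo (0:ℝ) 1) {x y : ℝ}
    (hx : 0 ≤ x) (hy : 0 ≤ y) (hxy : x + y = 1) :
    rt (Kᴴ * matPow (x • A₀ + y • A₁) (1+p) * K * matPow (x • B₀ + y • B₁) (-p)) ≤
    x * rt (Kᴴ * matPow A₀ (1+p) * K * matPow B₀ (-p)) + y * rt (Kᴴ * matPow A₁ (1+p) * K * matPow B₁ (-p)) := by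
  have hA := posDef_comb hA₀ hA₁ hx hy hxy
  have hB := posDef_comb hB₀ hB₁ hx hy hxy
  obtain ⟨i0, e0⟩ := ando_int hA₀ hB₀ K hp
  obtain ⟨i1, e1⟩ := ando_int hA₁ hB₁ K hp
  obtain ⟨i, e⟩ := ando_int hA hB K hp
  rw [e0, e1, e]
  have hc : 0 ≤ (∫ t in Ioi 0, rpowIntegrand₀₁ p t 1)⁻¹ := inv_nonneg.mpr (integral_rpowIntegrand₀₁_one_pos hp).le
  have : ∫ t in Ioi 0, t ^ (p-1) * (rt (Kᴴ * (x • A₀ + y • A₁) * K) - t * rho hA hB K t) ≤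
     x * (∫ t in Ioi 0, t ^ (p-1) * (rt (Kᴴ * A₀ * K) - t * rho hA₀ hB₀ K t)) +
      y * (∫ t in Ioi 0, t ^ (p-1) * (rt (Kᴴ * A₁ * K) - t * rho hA₁ hB₁ K t)) := by
    rw [← integral_const_mul, ← integral_const_mul, ← integral_add (i0.const_mul x) (i1.const_mul y)]
    refine setIntegral_mono_on i ((i0.const_mul x).add (i1.const_mul y)) measurableSet_Ioi ?_
    intro t ht
    have ht' : 0 < t := ht
    have h1 := mul_le_mul_of_nonneg_left (rho_concave hA₀ hA₁ hB₀ hB₁ K ht' hx hy hA hB) ht'.le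
    have h2 : rt (Kᴴ * (x • A₀ + y • A₁) * K) = x * rt (Kᴴ * A₀ * K) + y * rt (Kᴴ * A₁ * K) := by
      simp only [Matrix.mul_add, Matrix.add_mul, Matrix.mul_smul, Matrix.smul_mul, rt_add, rt_smul]
    have h3 : rt (Kᴴ * (x • A₀ + y • A₁) * K) - t * rho hA hB K t ≤
      x * (rt (Kᴴ * A₀ * K) - t * rho hA₀ hB₀ K t) + y * (rt (Kᴴ * A₁ * K) - t * rho hA₁ hB₁ K t) := by
      rw [h2]; linarith
    have := mul_le_mul_of_nonneg_left h3 (rpow_nonneg ht'.le (p-1))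
    linarith
  have := mul_le_mul_of_nonneg_left this hc
  linarith

theorem rt_pow_cont {A : Matrix m m ℂ} {B : Matrix n n ℂ} (hA : A.PosDef) (hB : B.PosDef)
    (K : Matrix m n ℂ) : Continuous fun p : ℝ => rt (Kᴴ * matPow A (1+p) * K * matPow B (-p)) := by
  simp only [rt_pow_sum hA hB]
  refine continuous_finsetSum _ fun i _ => continuous_finsetSum _ fun j _ => ?_
  refine continuous_const.mul (Continuous.mul ?_ ?_)
  · exact (Real.continuous_const_rpow (hA.eigenvalues_pos i).ne').comp (continuous_const.add continuous_id)
  · exact (Real.continuous_const_rpow (hB.eigenvalues_pos j).ne').comp (continuous_neg)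

theorem ando {A₀ A₁ : Matrix m m ℂ} {B₀ B₁ : Matrix n n ℂ} (hA₀ : A₀.PosDef) (hA₁ : A₁.PosDef)
    (hB₀ : B₀.PosDef) (hB₁ : B₁.PosDef) (K : Matrix m n ℂ) {p : ℝ} (hp : p ∈ Set.Icc (1:ℝ) 2) {x y : ℝ}
    (hx : 0 ≤ x) (hy : 0 ≤ y) (hxy : x + y = 1) :
    rt (Kᴴ * matPow (x • A₀ + y • A₁) p * K * matPow (x • B₀ + y • B₁) (1-p)) ≤
    x * rt (Kᴴ * matPow A₀ p * K * matPow B₀ (1-p)) + y * rt (Kᴴ * matPow A₁ p * K * matPow B₁ (1-p)) := by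
  have hA := posDef_comb hA₀ hA₁ hx hy hxy
  have hB := posDef_comb hB₀ hB₁ hx hy hxy
  have hcl : IsClosed {p : ℝ | rt (Kᴴ * matPow (x • A₀ + y • A₁) (1+p) * K * matPow (x • B₀ + y • B₁) (-p)) ≤
    x * rt (Kᴴ * matPow A₀ (1+p) * K * matPow B₀ (-p)) + y * rt (Kᴴ * matPow A₁ (1+p) * K * matPow B₁ (-p))} :=
    isClosed_le (rt_pow_cont hA hB K)
      ((continuous_const.mul (rt_pow_cont hA₀ hB₀ K)).add (continuous_const.mul (rt_pow_cont hA₁ hB₁ K)))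
  have hsub := hcl.closure_subset_iff.mpr (fun q hq => ando_Ioo hA₀ hA₁ hB₀ hB₁ K (p := q) hq hx hy hxy : Set.Ioo (0:ℝ) 1 ⊆ _)
  rw [closure_Ioo (by norm_num)] at hsub
  have := hsub (show p - 1 ∈ Set.Icc (0:ℝ) 1 from ⟨by linarith [hp.1], by linarith [hp.2]⟩)
  simp only [Set.mem_ofPred_eq] at this
  have e1 : 1 + (p - 1) = p := by ring
  have e2 : -(p - 1) = 1 - p := by ring
  rwa [e1, e2] at this

end Klein

set_option linter.unusedSectionVars false

section Epstein

variable {m n ι : Type*} [Fintype m] [DecidableEq m] [Fintype n] [DecidableEq n] [Fintype ι]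

/-- completely positive map in Kraus form -/
noncomputable def Phi (K : ι → Matrix m n ℂ) (X : Matrix m m ℂ) : Matrix n n ℂ :=
  ∑ i, (K i)ᴴ * X * K i

theorem rt_sum (f : ι → Matrix n n ℂ) : rt (∑ i, f i) = ∑ i, rt (f i) := by
  simp [rt, Matrix.trace_sum]

theorem conc_of_young {P P₀ P₁ : Matrix n n ℂ} (hP : P.PosDef) (hP₀ : P₀.PosDef) (hP₁ : P₁.PosDef)
    {β : ℝ} (hβ : 1 ≤ β) {x y : ℝ} (hx : 0 ≤ x) (hy : 0 ≤ y) (hxy : x + y = 1)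
    (h : ∀ V₀ V₁ : Matrix n n ℂ, V₀.PosDef → V₁.PosDef →
      x * rt (P₀ * matPow V₀ (1-1/β)) + y * rt (P₁ * matPow V₁ (1-1/β)) ≤
        rt (P * matPow (x • V₀ + y • V₁) (1-1/β))) :
    x * trp P₀ β + y * trp P₁ β ≤ trp P β := by
  have hb : β ≠ 0 := by linarith
  have h0 := matPow_posDef hP₀ β
  have h1 := matPow_posDef hP₁ β
  have h2 := h _ _ h0 h1
  rw [young_eq hP₀ hb, young_eq hP₁ hb] at h2
  have h3 := young_ge hP (posDef_comb h0 h1 hx hy hxy) hβ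
  rw [rt_add, rt_smul, rt_smul, ← trp_eq_rt, ← trp_eq_rt] at h3
  have h4 := mul_le_mul_of_nonneg_left h2 (show 0 ≤ β by linarith)
  linarith

theorem conv_of_young {P P₀ P₁ : Matrix n n ℂ} (hP : P.PosDef) (hP₀ : P₀.PosDef) (hP₁ : P₁.PosDef)
    {α : ℝ} (hα : 0 < α) (hα1 : α ≤ 1) {x y : ℝ} (hx : 0 ≤ x) (hy : 0 ≤ y) (hxy : x + y = 1)
    (h : ∀ V₀ V₁ : Matrix n n ℂ, V₀.PosDef → V₁.PosDef →
        rt (P * matPow (x • V₀ + y • V₁) (1-1/α)) ≤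
      x * rt (P₀ * matPow V₀ (1-1/α)) + y * rt (P₁ * matPow V₁ (1-1/α))) :
    trp P α ≤ x * trp P₀ α + y * trp P₁ α := by
  have hb : α ≠ 0 := by linarith
  have h0 := matPow_posDef hP₀ α
  have h1 := matPow_posDef hP₁ α
  have h2 := h _ _ h0 h1
  rw [young_eq hP₀ hb, young_eq hP₁ hb] at h2
  have h3 := young_le hP (posDef_comb h0 h1 hx hy hxy) hα hα1
  rw [rt_add, rt_smul, rt_smul, ← trp_eq_rt, ← trp_eq_rt] at h3
  have h4 := mul_le_mul_of_nonneg_left h2 hα.le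
  linarith

theorem trp_convex {P₀ P₁ : Matrix n n ℂ} (hP₀ : P₀.PosDef) (hP₁ : P₁.PosDef)
    {β : ℝ} (hβ : 1 ≤ β) {x y : ℝ} (hx : 0 ≤ x) (hy : 0 ≤ y) (hxy : x + y = 1) :
    trp (x • P₀ + y • P₁) β ≤ x * trp P₀ β + y * trp P₁ β := by
  have hb : β ≠ 0 := by linarith
  have hP := posDef_comb hP₀ hP₁ hx hy hxy
  have hV := matPow_posDef hP β
  have h0 := mul_le_mul_of_nonneg_left (young_ge hP₀ hV hβ) hx
  have h1 := mul_le_mul_of_nonneg_left (young_ge hP₁ hV hβ) hy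
  have h2 := young_eq hP hb
  rw [← trp_eq_rt] at h0 h1
  rw [Matrix.add_mul, Matrix.smul_mul, Matrix.smul_mul, rt_add, rt_smul, rt_smul] at h2
  have h3 : (β - 1) * trp (x • P₀ + y • P₁) β = x * ((β - 1) * trp (x • P₀ + y • P₁) β) +
    y * ((β - 1) * trp (x • P₀ + y • P₁) β) := by rw [← add_mul, hxy, one_mul]
  have h4 := congrArg (β * ·) h2
  linarith

theorem trp_concave {P₀ P₁ : Matrix n n ℂ} (hP₀ : P₀.PosDef) (hP₁ : P₁.PosDef)
    {α : ℝ} (hα : 0 < α) (hα1 : α ≤ 1) {x y : ℝ} (hx : 0 ≤ x) (hy : 0 ≤ y) (hxy : x + y = 1) :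
    x * trp P₀ α + y * trp P₁ α ≤ trp (x • P₀ + y • P₁) α := by
  have hb : α ≠ 0 := by linarith
  have hP := posDef_comb hP₀ hP₁ hx hy hxy
  have hV := matPow_posDef hP α
  have h0 := mul_le_mul_of_nonneg_left (young_le hP₀ hV hα hα1) hx
  have h1 := mul_le_mul_of_nonneg_left (young_le hP₁ hV hα hα1) hy
  have h2 := young_eq hP hb
  rw [← trp_eq_rt] at h0 h1
  rw [Matrix.add_mul, Matrix.smul_mul, Matrix.smul_mul, rt_add, rt_smul, rt_smul] at h2
  have h3 : (1 - α) * trp (x • P₀ + y • P₁) α = x * ((1 - α) * trp (x • P₀ + y • P₁) α) +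
    y * ((1 - α) * trp (x • P₀ + y • P₁) α) := by rw [← add_mul, hxy, one_mul]
  have h4 := congrArg (α * ·) h2
  linarith

theorem epstein (K : ι → Matrix m n ℂ) (hK : ∀ X, X.PosDef → (Phi K X).PosDef)
    {A₀ A₁ : Matrix m m ℂ} (hA₀ : A₀.PosDef) (hA₁ : A₁.PosDef) {p : ℝ} (hp : p ∈ Set.Ioo (0:ℝ) 1)
    {x y : ℝ} (hx : 0 ≤ x) (hy : 0 ≤ y) (hxy : x + y = 1) :
    x * trp (Phi K (matPow A₀ p)) (1/p) + y * trp (Phi K (matPow A₁ p)) (1/p) ≤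
      trp (Phi K (matPow (x • A₀ + y • A₁) p)) (1/p) := by
  have hA := posDef_comb hA₀ hA₁ hx hy hxy
  refine conc_of_young (hK _ (matPow_posDef hA p)) (hK _ (matPow_posDef hA₀ p)) (hK _ (matPow_posDef hA₁ p))
    (by rw [le_div_iff₀ hp.1]; linarith [hp.2]) hx hy hxy ?_
  intro V₀ V₁ h0 h1
  rw [one_div_one_div]
  simp only [Phi, Finset.sum_mul, rt_sum, Finset.mul_sum, ← Finset.sum_add_distrib]
  exact Finset.sum_le_sum fun i _ => lieb hA₀ hA₁ h0 h1 (K i) hp hx hy hxy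

theorem conv_p {A₀ A₁ : Matrix n n ℂ} (hA₀ : A₀.PosDef) (hA₁ : A₁.PosDef) {K : Matrix n n ℂ}
    (hK : IsUnit K) {p : ℝ} (hp : p ∈ Set.Icc (1:ℝ) 2)
    {x y : ℝ} (hx : 0 ≤ x) (hy : 0 ≤ y) (hxy : x + y = 1) :
    trp (Kᴴ * matPow (x • A₀ + y • A₁) p * K) (1/p) ≤
    x * trp (Kᴴ * matPow A₀ p * K) (1/p) + y * trp (Kᴴ * matPow A₁ p * K) (1/p) := by
  have hA := posDef_comb hA₀ hA₁ hx hy hxy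
  have hp0 : 0 < p := by linarith [hp.1]
  refine conv_of_young (posDef_mul_mul' (matPow_posDef hA p) hK) (posDef_mul_mul' (matPow_posDef hA₀ p) hK)
    (posDef_mul_mul' (matPow_posDef hA₁ p) hK) (by positivity)
    (by rw [div_le_one hp0]; exact hp.1) hx hy hxy ?_
  intro V₀ V₁ h0 h1
  rw [one_div_one_div]
  exact ando hA₀ hA₁ h0 h1 K hp hx hy hxy

theorem dg_conj (e : n → ℝ) : (dg e)ᴴ = dg e := by
  rw [dg, Matrix.diagonal_conjTranspose]; congr 1; ext i; simp

theorem dg_posDef {d : n → ℝ} (hd : ∀ i, 0 < d i) : (dg d).PosDef := by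
  have := posDef_conj (U := (1 : Matrix n n ℂ)) (by simp) hd
  simpa using this

theorem pinch (f : Matrix n n ℂ → ℝ)
    (hc : ∀ A B : Matrix n n ℂ, A.PosDef → B.PosDef →
      (1/2) * f A + (1/2) * f B ≤ f ((1/2 : ℝ) • A + (1/2 : ℝ) • B))
    (hi : ∀ (M : Matrix n n ℂ) (e : n → ℝ), M.PosDef → (∀ i, e i * e i = 1) → f (dg e * M * dg e) = f M)
    {M : Matrix n n ℂ} (hM : M.PosDef) :
    ∃ e : n → ℝ, (∀ i, 0 < e i) ∧ (∀ i, M i i = e i) ∧ f M ≤ f (dg e) := by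
  have step : ∀ S : Finset n, ∃ M' : Matrix n n ℂ, M'.PosDef ∧ (∀ i, M' i i = M i i) ∧ f M ≤ f M' ∧
      ∀ i j, i ≠ j → i ∈ S → M' i j = 0 := by
    intro S
    induction S using Finset.induction_on with
    | empty => exact ⟨M, hM, fun _ => rfl, le_rfl, by simp⟩
    | insert k S hk ih =>
      obtain ⟨M', h1, h2, h3, h4⟩ := ih
      set e : n → ℝ := fun i => if i = k then -1 else 1 with he
      have hee : ∀ i, e i * e i = 1 := by intro i; simp only [he]; split_ifs <;> norm_num
      have hdd : dg e * dg e = 1 := by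
        rw [dg_mul]; simp only [hee, dg_one]
      have hpd : (dg e * M' * dg e).PosDef := by
        have := posDef_mul_mul h1 (X := dg e) (IsUnit.of_mul_eq_one _ hdd)
        rwa [dg_conj] at this
      have hent : ∀ i j, ((1/2 : ℝ) • M' + (1/2 : ℝ) • (dg e * M' * dg e)) i j =
          ((1/2 * (1 + e i * e j) : ℝ) : ℂ) * M' i j := by
        intro i j
        simp only [dg, Matrix.add_apply, Matrix.smul_apply, Matrix.mul_diagonal, Matrix.diagonal_mul]
        simp only [Complex.real_smul]
        push_cast; ring
      refine ⟨(1/2 : ℝ) • M' + (1/2 : ℝ) • (dg e * M' * dg e),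
        posDef_comb h1 hpd (by norm_num) (by norm_num) (by norm_num), ?_, ?_, ?_⟩
      · intro i
        rw [hent, hee, h2]; norm_num
      · have := hc M' _ h1 hpd
        rw [hi M' e h1 hee] at this
        linarith
      · intro i j hij hi'
        rw [hent]
        rcases Finset.mem_insert.mp hi' with rfl | hS
        · have : e i * e j = -1 := by simp [he, hij.symm]
          rw [this]; norm_num
        · rw [h4 i j hij hS, mul_zero]
  obtain ⟨M', h1, h2, h3, h4⟩ := step Finset.univ
  have hre : ∀ i, M' i i = (((M' i i).re : ℝ) : ℂ) := by
    intro i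
    have := h1.1.apply i i
    exact (Complex.conj_eq_iff_real.mp this).elim (fun r hr => by rw [hr]; simp)
  refine ⟨fun i => (M' i i).re, ?_, ?_, ?_⟩
  · intro i
    have := h1.diag_pos (i := i)
    exact (Complex.lt_def.mp this).1
  · intro i; rw [← h2]; exact hre i
  · have : dg (fun i => (M' i i).re) = M' := by
      ext i j
      by_cases hij : i = j
      · subst hij; simp only [dg, Matrix.diagonal_apply_eq]; exact (hre i).symm
      · rw [h4 i j hij (Finset.mem_univ _)]; simp [dg, hij]
    rw [this]; exact h3

theorem trp_dg {d : n → ℝ} (hd : ∀ i, 0 < d i) (t : ℝ) : trp (dg d) t = ∑ i, d i ^ t := by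
  rw [trp, matPow_dg hd, dg, Matrix.trace_diagonal, Complex.re_sum]
  simp only [Complex.ofReal_re]

theorem trp_unitary {M V : Matrix n n ℂ} (hM : M.PosDef) (hV : Vᴴ * V = 1) (t : ℝ) :
    trp (V * M * Vᴴ) t = trp M t := by
  rw [trp, matPow_unitary_conj hM hV, Matrix.mul_assoc, Matrix.trace_mul_comm, Matrix.mul_assoc, hV, Matrix.mul_one, trp]

theorem lt_dg {d : n → ℝ} (hd : ∀ i, 0 < d i) {M : Matrix n n ℂ} (hM : M.PosDef) {α : ℝ} (hα : 1 < α) :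
    trp (matPow (dg d) (1/2) * M * matPow (dg d) (1/2)) α ≤ rt (matPow (dg d) α * matPow M α) := by
  have hα0 : 0 < α := by linarith
  set D := matPow (dg d) (1/2) with hD
  have hDd : D = dg (fun i => d i ^ (1/2 : ℝ)) := matPow_dg hd _
  have hDu : IsUnit D := (matPow_posDef (dg_posDef hd) _).isUnit
  have hDh : Dᴴ = D := matPow_herm (dg_posDef hd) _
  have hpd : ∀ X : Matrix n n ℂ, X.PosDef → (D * X * D).PosDef := by
    intro X hX
    have := posDef_mul_mul hX hDu
    rwa [hDh] at this
  have hPhi : ∀ X : Matrix n n ℂ, Phi (fun _ : Unit => D) X = D * X * D := by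
    intro X; simp [Phi, hDh]
  have hp : (1/α) ∈ Set.Ioo (0:ℝ) 1 := ⟨by positivity, by rw [div_lt_one hα0]; exact hα⟩
  obtain ⟨e, he, hdiag, hle⟩ := pinch (fun m => trp (D * matPow m (1/α) * D) α) (by
    intro A B hA hB
    have := epstein (fun _ : Unit => D) (by intro X hX; rw [hPhi]; exact hpd X hX) hA hB hp
      (x := 1/2) (y := 1/2) (by norm_num) (by norm_num) (by norm_num)
    simpa only [hPhi, one_div_one_div] using this) (by
    intro M e hM hee
    have hdd : dg e * dg e = 1 := by
      rw [dg_mul]; simp only [hee, dg_one]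
    have hdu : (dg e)ᴴ * dg e = 1 := by rw [dg_conj, hdd]
    have h1 := matPow_unitary_conj hM hdu (1/α)
    rw [dg_conj] at h1
    have hcomm : D * dg e = dg e * D := by rw [hDd, dg_mul, dg_mul]; simp only [mul_comm]
    rw [h1]
    have h2 : D * (dg e * matPow M (1/α) * dg e) * D = dg e * (D * matPow M (1/α) * D) * (dg e)ᴴ := by
      rw [dg_conj]
      calc _ = (D * dg e) * matPow M (1/α) * (dg e * D) := by simp only [Matrix.mul_assoc]
        _ = _ := by rw [hcomm, ← hcomm]; nth_rewrite 1 [hcomm]; simp only [Matrix.mul_assoc]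
    rw [h2, trp_unitary (hpd _ (matPow_posDef hM _)) hdu]) (matPow_posDef hM α)
  rw [matPow_matPow hM, mul_one_div_cancel hα0.ne', matPow_one hM] at hle
  refine hle.trans (le_of_eq ?_)
  rw [matPow_dg he, hDd, dg_mul, dg_mul, trp_dg, matPow_dg hd]
  · simp only [rt, Matrix.trace, dg, Matrix.diag, Matrix.diagonal_mul, hdiag, Complex.re_sum]
    refine Finset.sum_congr rfl fun i _ => ?_
    rw [← Complex.ofReal_mul, Complex.ofReal_re]
    have h1 : d i ^ (1/2:ℝ) * e i ^ (1/α) * d i ^ (1/2:ℝ) = d i * e i ^ (1/α) := by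
      have : d i ^ (1/2:ℝ) * d i ^ (1/2:ℝ) = d i := by
        rw [← Real.rpow_add (hd i)]; norm_num
      rw [mul_right_comm, this]
    rw [h1, Real.mul_rpow (hd i).le (Real.rpow_nonneg (he i).le _), ← Real.rpow_mul (he i).le,
      one_div_mul_cancel hα0.ne', Real.rpow_one]
  · intro i
    have := hd i
    have := he i
    positivity

theorem lieb_thirring {N M : Matrix n n ℂ} (hN : N.PosDef) (hM : M.PosDef) {α : ℝ} (hα : 1 < α) :
    trp (matPow N (1/2) * M * matPow N (1/2)) α ≤ rt (matPow N α * matPow M α) := by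
  obtain ⟨U, d, h1, h2, hd, rfl⟩ := exists_conj hN
  have hU' : Uᴴᴴ * Uᴴ = 1 := by rw [Matrix.conjTranspose_conjTranspose, h2]
  have hM' : (Uᴴ * M * U).PosDef := by
    have := posDef_mul_mul hM (X := Uᴴ) (IsUnit.of_mul_eq_one _ h1)
    rwa [Matrix.conjTranspose_conjTranspose] at this
  have key := lt_dg hd hM' hα
  have e1 := matPow_unitary_conj hM hU' α
  rw [Matrix.conjTranspose_conjTranspose] at e1
  have e2 : ∀ t, matPow (U * dg d * Uᴴ) t = U * matPow (dg d) t * Uᴴ := fun t =>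
    matPow_unitary_conj (dg_posDef hd) h1 t
  rw [e1] at key
  have e3 : matPow (U * dg d * Uᴴ) (1/2) * M * matPow (U * dg d * Uᴴ) (1/2) =
    U * (matPow (dg d) (1/2) * (Uᴴ * M * U) * matPow (dg d) (1/2)) * Uᴴ := by
    rw [e2]; simp only [Matrix.mul_assoc]
  rw [e3, trp_unitary (posDef_sandwich (dg_posDef hd) hM' _) h1, e2]
  refine key.trans (le_of_eq ?_)
  calc rt (matPow (dg d) α * (Uᴴ * matPow M α * U)) = rt ((matPow (dg d) α * Uᴴ * matPow M α) * U) := by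
        simp only [Matrix.mul_assoc]
    _ = _ := by rw [rt_comm]; simp only [Matrix.mul_assoc]

theorem holder_ge {N M : Matrix n n ℂ} (hN : N.PosDef) (hM : M.PosDef) {α s β : ℝ} (hα : 1 < α)
    (hs : 0 < s) (hβ : 0 < β) (h : 1/α = 1/s + 1/β) :
    trp (matPow N (1/2) * M * matPow N (1/2)) α ≤ (α/s) * trp M s + (α/β) * trp N β := by
  have hα0 : 0 < α := by linarith
  have hw : α/s + α/β = 1 := by
    have : α * (1/α) = α * (1/s+1/β) := by rw [h]
    rw [mul_one_div_cancel hα0.ne'] at this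
    rw [this]; ring
  have := klein hN hM (-1) α α (α/s) 0 s (α/β) β 0 (by
    intro u v hu hv
    have := Real.geom_mean_le_arith_mean2_weighted (w₁ := α/s) (w₂ := α/β) (p₁ := v^s) (p₂ := u^β)
      (by positivity) (by positivity) (by positivity) (by positivity) hw
    rw [← Real.rpow_mul hu.le, ← Real.rpow_mul hv.le, mul_div_cancel₀ _ hs.ne', mul_div_cancel₀ _ hβ.ne'] at this
    simp only [Real.rpow_zero]
    linarith)
  rw [matPow_zero hN, matPow_zero hM, Matrix.mul_one, Matrix.one_mul] at this
  have h2 := lieb_thirring hN hM hα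
  rw [trp_eq_rt M, trp_eq_rt N]
  linarith

theorem trp_sim {M N G H : Matrix n n ℂ} (hM : M.PosDef) (hN : N.PosDef) (hHG : H * G = 1)
    (t : ℝ) : trp (matPow (Gᴴ * M * G) (1/2) * (H * N * Hᴴ) * matPow (Gᴴ * M * G) (1/2)) t =
      trp (matPow M (1/2) * N * matPow M (1/2)) t := by
  have hGH : G * H = 1 := mul_eq_one_comm.mp hHG
  have hG : IsUnit G := IsUnit.of_mul_eq_one _ hGH
  have hH : IsUnit H := IsUnit.of_mul_eq_one _ hHG
  have hM' := posDef_mul_mul' hM hG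
  have hN' := posDef_mul_mul hN hH
  have half : ∀ X : Matrix n n ℂ, X.PosDef → matPow X (1/2) * matPow X (1/2) = X := by
    intro X hX; rw [matPow_half hX, matPow_one hX]
  refine trp_charpoly (posDef_sandwich hM' hN' _) (posDef_sandwich hM hN _) ?_ t
  have hHG' : Hᴴ * Gᴴ = 1 := by rw [← Matrix.conjTranspose_mul, hGH, Matrix.conjTranspose_one]
  calc _ = ((H * N * Hᴴ) * (Gᴴ * M * G)).charpoly := by
        rw [Matrix.mul_assoc, Matrix.charpoly_mul_comm, Matrix.mul_assoc, half _ hM']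
    _ = (H * (N * (Hᴴ * Gᴴ) * M * G)).charpoly := by simp only [Matrix.mul_assoc]
    _ = (N * M).charpoly := by
        rw [hHG', Matrix.charpoly_mul_comm, Matrix.mul_one, Matrix.mul_assoc, hGH, Matrix.mul_one]
    _ = _ := by
        rw [Matrix.mul_assoc (matPow M (1/2)), Matrix.charpoly_mul_comm (matPow M (1/2)), Matrix.mul_assoc, half _ hM]

theorem holder_le {N M : Matrix n n ℂ} (hN : N.PosDef) (hM : M.PosDef) {α s β : ℝ} (hα : 0 < α) (hα1 : α ≤ 1)
    (hs : 0 < s) (hβ : 1 ≤ β) (h : 1/α = 1/s + 1/β) :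
    trp (matPow M (1/2) * N * matPow M (1/2)) α ≤ (α/s) * trp M s + (α/β) * trp N β := by
  have hβ0 : 0 < β := by linarith
  have hw : α/s = 1 - α/β := by
    have : α * (1/α) = α * (1/s+1/β) := by rw [h]
    rw [mul_one_div_cancel hα.ne'] at this
    rw [this]; ring
  have hV := matPow_posDef hM s
  have h1 := young_le (posDef_sandwich hM hN (1/2)) hV hα hα1
  have h2 := young_ge hN hV hβ
  have e : rt (matPow M (1/2) * N * matPow M (1/2) * matPow (matPow M s) (1-1/α)) =
      rt (N * matPow (matPow M s) (1-1/β)) := by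
    rw [matPow_matPow hM, matPow_matPow hM, Matrix.mul_assoc, matPow_mul hM, Matrix.mul_assoc, rt_comm, Matrix.mul_assoc,
      matPow_mul hM]
    congr 3
    have : s * (1/α) = 1 + s * (1/β) := by rw [h]; field_simp
    linarith
  rw [e] at h1
  rw [← trp_eq_rt] at h1 h2
  rw [hw]
  have h3 := mul_le_mul_of_nonneg_left h2 (show 0 ≤ α/β by positivity)
  have e2 : α/β * (β * rt (N * matPow (matPow M s) (1-1/β))) = α * rt (N * matPow (matPow M s) (1-1/β)) := by
    field_simp
  have e3 : α/β * (trp N β + (β-1) * trp M s) = α/β * trp N β + (α - α/β) * trp M s := by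
    field_simp
  rw [e2, e3] at h3
  linarith

theorem trp_mono_pow_congr {M : Matrix n n ℂ} {s t : ℝ} (h : s = t) : trp M s = trp M t := by rw [h]

theorem L7 (K : ι → Matrix m n ℂ) (hK : ∀ X, X.PosDef → (Phi K X).PosDef)
    {V₀ V₁ : Matrix m m ℂ} (hV₀ : V₀.PosDef) (hV₁ : V₁.PosDef)
    {B₀ B₁ : Matrix n n ℂ} (hB₀ : B₀.PosDef) (hB₁ : B₁.PosDef)
    {b c : ℝ} (hb : 0 < b) (hc : 0 < c) (hbc : b + c < 1)
    {x y : ℝ} (hx : 0 ≤ x) (hy : 0 ≤ y) (hxy : x + y = 1) :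
    x * trp (matPow B₀ (b/2) * Phi K (matPow V₀ c) * matPow B₀ (b/2)) (1/(b+c)) +
    y * trp (matPow B₁ (b/2) * Phi K (matPow V₁ c) * matPow B₁ (b/2)) (1/(b+c)) ≤
    trp (matPow (x • B₀ + y • B₁) (b/2) * Phi K (matPow (x • V₀ + y • V₁) c) * matPow (x • B₀ + y • B₁) (b/2)) (1/(b+c)) := by
  have hB := posDef_comb hB₀ hB₁ hx hy hxy
  have hV := posDef_comb hV₀ hV₁ hx hy hxy
  set B := x • B₀ + y • B₁ with hBdef
  set V := x • V₀ + y • V₁ with hVdef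
  have hbc0 : 0 < b + c := by linarith
  set σ := 1/(b+c) with hσ
  have hσ1 : 1 < σ := by rw [hσ, lt_div_iff₀ hbc0]; linarith
  have hσ0 : 0 < σ := by linarith
  have hbcσ : b * σ + c * σ = 1 := by rw [hσ]; field_simp
  set N := Phi K (matPow V c) with hNdef
  have hN : N.PosDef := hK _ (matPow_posDef hV c)
  set P := matPow B (b/2) * N * matPow B (b/2) with hPdef
  have hP : P.PosDef := posDef_sandwich hB hN _
  set G := matPow B (-(b/2)) * matPow P (b*σ/2) with hG
  set H := matPow P (-(b*σ/2)) * matPow B (b/2) with hH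
  have hHG : H * G = 1 := by
    rw [hH, hG]
    calc _ = matPow P (-(b*σ/2)) * (matPow B (b/2) * matPow B (-(b/2))) * matPow P (b*σ/2) := by
          simp only [Matrix.mul_assoc]
      _ = 1 := by rw [matPow_mul_neg hB, Matrix.mul_one, matPow_neg_mul hP]
  have hGH : G * H = 1 := mul_eq_one_comm.mp hHG
  have hGu : IsUnit G := IsUnit.of_mul_eq_one _ hGH
  have hHu : IsUnit H := IsUnit.of_mul_eq_one _ hHG
  have eG : Gᴴ * matPow B b * G = matPow P (b*σ) := by
    rw [hG, Matrix.conjTranspose_mul, matPow_herm hB, matPow_herm hP]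
    calc _ = matPow P (b*σ/2) * (matPow B (-(b/2)) * matPow B b * matPow B (-(b/2))) * matPow P (b*σ/2) := by
          simp only [Matrix.mul_assoc]
      _ = _ := by
          rw [matPow_mul hB, matPow_mul hB]
          have : -(b/2) + b + -(b/2) = 0 := by ring
          rw [this, matPow_zero hB, Matrix.mul_one, matPow_half hP]
  have eH : H * N * Hᴴ = matPow P (c*σ) := by
    rw [hH, Matrix.conjTranspose_mul, matPow_herm hB, matPow_herm hP]
    calc _ = matPow P (-(b*σ/2)) * P * matPow P (-(b*σ/2)) := by
          rw [hPdef]; simp only [Matrix.mul_assoc]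
      _ = matPow P (-(b*σ/2)) * matPow P 1 * matPow P (-(b*σ/2)) := by rw [matPow_one hP]
      _ = _ := by
          rw [matPow_mul hP, matPow_mul hP]
          congr 1; linarith
  have bound : ∀ (B' : Matrix n n ℂ) (V' : Matrix m m ℂ), B'.PosDef → V'.PosDef →
      trp (matPow B' (b/2) * Phi K (matPow V' c) * matPow B' (b/2)) σ ≤
        (σ * c) * trp (H * Phi K (matPow V' c) * Hᴴ) (1/c) + (σ * b) * trp (Gᴴ * matPow B' b * G) (1/b) := by
    intro B' V' hB' hV'
    have h1 := holder_ge (posDef_mul_mul' (matPow_posDef hB' b) hGu)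
      (posDef_mul_mul (hK _ (matPow_posDef hV' c)) hHu) hσ1 (s := 1/c) (β := 1/b) (by positivity) (by positivity)
      (by rw [hσ]; simp; ring)
    rw [trp_sim (matPow_posDef hB' b) (hK _ (matPow_posDef hV' c)) hHG, matPow_matPow hB', mul_one_div] at h1
    simpa using h1
  have c1 : x * trp (Gᴴ * matPow B₀ b * G) (1/b) + y * trp (Gᴴ * matPow B₁ b * G) (1/b) ≤
      trp (Gᴴ * matPow B b * G) (1/b) := by
    have hPhi : ∀ X : Matrix n n ℂ, Phi (fun _ : Unit => G) X = Gᴴ * X * G := by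
      intro X; simp [Phi]
    have := epstein (fun _ : Unit => G) (by intro X hX; rw [hPhi]; exact posDef_mul_mul' hX hGu) hB₀ hB₁
      (p := b) ⟨hb, by linarith⟩ hx hy hxy
    simpa only [hPhi] using this
  have c2 : x * trp (H * Phi K (matPow V₀ c) * Hᴴ) (1/c) + y * trp (H * Phi K (matPow V₁ c) * Hᴴ) (1/c) ≤
      trp (H * Phi K (matPow V c) * Hᴴ) (1/c) := by
    have hPhi : ∀ X : Matrix m m ℂ, Phi (fun i => K i * Hᴴ) X = H * Phi K X * Hᴴ := by
      intro X
      simp only [Phi, Matrix.conjTranspose_mul, Matrix.conjTranspose_conjTranspose, Finset.mul_sum, Finset.sum_mul, Matrix.mul_assoc]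
    have := epstein (fun i => K i * Hᴴ) (by intro X hX; rw [hPhi]; exact posDef_mul_mul (hK _ hX) hHu) hV₀ hV₁
      (p := c) ⟨hc, by linarith⟩ hx hy hxy
    simpa only [hPhi] using this
  have e1 : trp (Gᴴ * matPow B b * G) (1/b) = trp P σ := by
    rw [eG, trp_matPow hP]; congr 1; field_simp
  have e2 : trp (H * Phi K (matPow V c) * Hᴴ) (1/c) = trp P σ := by
    rw [← hNdef, eH, trp_matPow hP]; congr 1; field_simp
  rw [e1] at c1
  rw [e2] at c2
  have b0 := mul_le_mul_of_nonneg_left (bound B₀ V₀ hB₀ hV₀) hx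
  have b1 := mul_le_mul_of_nonneg_left (bound B₁ V₁ hB₁ hV₁) hy
  have d1 := mul_le_mul_of_nonneg_left c1 (show 0 ≤ σ * b by positivity)
  have d2 := mul_le_mul_of_nonneg_left c2 (show 0 ≤ σ * c by positivity)
  have e3 : trp P σ = σ * b * trp P σ + σ * c * trp P σ := by
    rw [← add_mul]; rw [show σ * b + σ * c = 1 by linarith, one_mul]
  linarith

theorem L8 {A₀ A₁ : Matrix n n ℂ} (hA₀ : A₀.PosDef) (hA₁ : A₁.PosDef) {K : Matrix n n ℂ}
    (hK : IsUnit K) {p α : ℝ} (hp : p ∈ Set.Icc (1:ℝ) 2) (hα : 1/p ≤ α) (hα1 : α ≤ 1)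
    {x y : ℝ} (hx : 0 ≤ x) (hy : 0 ≤ y) (hxy : x + y = 1) :
    trp (Kᴴ * matPow (x • A₀ + y • A₁) p * K) α ≤
    x * trp (Kᴴ * matPow A₀ p * K) α + y * trp (Kᴴ * matPow A₁ p * K) α := by
  have hp0 : 0 < p := by linarith [hp.1]
  rcases hα.eq_or_lt with rfl | hα
  · exact conv_p hA₀ hA₁ hK hp hx hy hxy
  have hA := posDef_comb hA₀ hA₁ hx hy hxy
  set A := x • A₀ + y • A₁ with hAdef
  have hα0 : 0 < α := lt_trans (by positivity) hα
  have hpos : 0 < p - 1/α := by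
    rw [sub_pos, div_lt_iff₀ hα0]
    rw [div_lt_iff₀ hp0] at hα; linarith
  have hle : p - 1/α ≤ 1 := by
    have : 1 ≤ 1/α := by rw [le_div_iff₀ hα0]; linarith
    linarith [hp.2]
  set ρ := 1/(p - 1/α) with hρ
  have hρ1 : 1 ≤ ρ := by rw [hρ, le_div_iff₀ hpos]; linarith
  have hρ0 : 0 < ρ := by linarith
  have hρinv : 1/ρ = p - 1/α := by rw [hρ, one_div_one_div]
  set M := Kᴴ * matPow A p * K with hMdef
  have hM : M.PosDef := posDef_mul_mul' (matPow_posDef hA p) hK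
  set N := matPow M (α/ρ) with hNdef
  have hN : N.PosDef := matPow_posDef hM _
  have hrel : 1/(1/p) = 1/α + 1/ρ := by rw [hρinv, one_div_one_div]; ring
  have hip : 1/p ≤ 1 := by rw [div_le_one hp0]; exact hp.1
  have hL := matPow_posDef hN (1/2)
  have hLh : (matPow N (1/2))ᴴ = matPow N (1/2) := matPow_herm hN _
  have hKL : IsUnit (K * matPow N (1/2)) := hK.mul hL.isUnit
  have bound : ∀ A' : Matrix n n ℂ, A'.PosDef →
      trp ((K * matPow N (1/2))ᴴ * matPow A' p * (K * matPow N (1/2))) (1/p) ≤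
      (1/p/α) * trp (Kᴴ * matPow A' p * K) α + (1/p/ρ) * trp N ρ := by
    intro A' hA'
    have hM' := posDef_mul_mul' (matPow_posDef hA' p) hK
    have := holder_le hN hM' (α := 1/p) (s := α) (β := ρ) (by positivity) hip hα0 hρ1 hrel
    refine le_trans (le_of_eq ?_) this
    refine trp_charpoly (posDef_mul_mul' (matPow_posDef hA' p) hKL) (posDef_sandwich hM' hN _) ?_ _
    have half : ∀ X : Matrix n n ℂ, X.PosDef → matPow X (1/2) * matPow X (1/2) = X := by
      intro X hX; rw [matPow_half hX, matPow_one hX]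
    rw [Matrix.mul_assoc (matPow _ _) N, Matrix.charpoly_mul_comm (matPow _ _) (N * _), Matrix.mul_assoc N, half _ hM',
      Matrix.conjTranspose_mul, hLh]
    calc _ = (matPow N (1/2) * (Kᴴ * matPow A' p * K * matPow N (1/2))).charpoly := by
          simp only [Matrix.mul_assoc]
      _ = _ := by
          rw [Matrix.charpoly_mul_comm, Matrix.mul_assoc, half _ hN, Matrix.charpoly_mul_comm]
  have eq1 : trp ((K * matPow N (1/2))ᴴ * matPow A p * (K * matPow N (1/2))) (1/p) = trp M α := by
    have : (K * matPow N (1/2))ᴴ * matPow A p * (K * matPow N (1/2)) = matPow N (1/2) * matPow M 1 * matPow N (1/2) := by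
      rw [Matrix.conjTranspose_mul, hLh, matPow_one hM, hMdef]; simp only [Matrix.mul_assoc]
    rw [this, hNdef, matPow_matPow hM, matPow_mul hM, matPow_mul hM, trp_matPow hM]
    congr 1
    have : α / ρ = α * p - 1 := by
      rw [div_eq_mul_one_div, hρinv]; field_simp
    rw [this]; field_simp; ring
  have eq2 : trp N ρ = trp M α := by
    rw [hNdef, trp_matPow hM]; congr 1; field_simp
  have conv := conv_p hA₀ hA₁ hKL hp hx hy hxy
  rw [← hAdef, eq1] at conv
  have b0 := mul_le_mul_of_nonneg_left (bound A₀ hA₀) hx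
  have b1 := mul_le_mul_of_nonneg_left (bound A₁ hA₁) hy
  rw [eq2] at b0 b1
  have hw : 1/p/α + 1/p/ρ = 1 := by
    have : 1/p/α + 1/p/ρ = 1/p * (1/α + 1/ρ) := by ring
    rw [this, ← hrel]; field_simp
  have e3 : trp M α = (1/p/α) * trp M α + (1/p/ρ) * trp M α := by rw [← add_mul, hw, one_mul]
  have e4 : (1/p/ρ) * trp M α = x * ((1/p/ρ) * trp M α) + y * ((1/p/ρ) * trp M α) := by
    rw [← add_mul, hxy, one_mul]
  have hpos2 : 0 < 1/p/α := by positivity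
  have : (1/p/α) * trp M α ≤ (1/p/α) * (x * trp (Kᴴ * matPow A₀ p * K) α + y * trp (Kᴴ * matPow A₁ p * K) α) := by
    linarith
  exact le_of_mul_le_mul_left this hpos2

end Epstein

set_option linter.unusedSectionVars false

section Contin

variable {m n ι : Type*} [Fintype m] [DecidableEq m] [Fintype n] [DecidableEq n] [Fintype ι]

open scoped Matrix.Norms.L2Operator in
theorem matPow_contOn (t : ℝ) : ContinuousOn (fun M : Matrix n n ℂ => matPow M t) {M | M.PosDef} := by
  have h := ContinuousOn.cfc_of_mem_nhdsSet (𝕜 := ℝ) (A := Matrix n n ℂ) (p := IsSelfAdjoint)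
    (s := Set.Ioi 0) (fun x : ℝ => if 0 < x then x ^ t else 0)
    (a := fun M : Matrix n n ℂ => M) (t := {M | M.PosDef}) (by
      rw [isOpen_Ioi.mem_nhdsSet]
      refine Set.iUnion₂_subset fun M hM => ?_
      intro x hx
      have hM' : M.PosDef := hM
      rw [hM'.1.spectrum_real_eq_range_eigenvalues] at hx
      obtain ⟨i, rfl⟩ := hx
      exact hM'.eigenvalues_pos i) continuousOn_id (fun M hM => (show M.PosDef from hM).1) (by
      refine ContinuousOn.congr (f := fun x : ℝ => x ^ t) ?_ ?_
      · intro x hx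
        exact (Real.continuousAt_rpow_const x t (Or.inl (ne_of_gt hx))).continuousWithinAt
      · intro x hx
        simp only [if_pos (show 0 < x from hx)])
  refine h.congr ?_
  intro M hM
  have hM' : M.PosDef := hM
  simp only
  rw [Matrix.IsHermitian.cfc_eq hM'.1]
  unfold matPow Matrix.IsHermitian.cfc
  rw [dif_pos hM'.1, Unitary.conjStarAlgAut_apply]
  rfl

theorem trp_contOn (t : ℝ) : ContinuousOn (fun M : Matrix n n ℂ => trp M t) {M | M.PosDef} := by
  have h : Continuous fun M : Matrix n n ℂ => (Matrix.trace M).re :=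
    Complex.continuous_re.comp (continuous_id.matrix_trace)
  exact h.comp_continuousOn (matPow_contOn t)

end Contin

set_option linter.unusedSectionVars false

section Tensor

variable {n₁ n₂ : Type*} [Fintype n₁] [DecidableEq n₁] [Fintype n₂] [DecidableEq n₂]

/-- embedding of the second factor -/
noncomputable def Jm (n₂ : Type*) [DecidableEq n₂] (i : n₁) : Matrix (n₁ × n₂) n₂ ℂ :=
  Matrix.of fun k j => if k = (i, j) then 1 else 0

theorem kron_eq (Y : Matrix n₂ n₂ ℂ) :
    ((1 : Matrix n₁ n₁ ℂ) ⊗ₖ Y) = ∑ i : n₁, Jm n₂ i * Y * (Jm n₂ i)ᴴ := by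
  ext ⟨i, j⟩ ⟨i', j'⟩
  rw [Matrix.sum_apply, Matrix.kroneckerMap_apply]
  have : ∀ k : n₁, (Jm n₂ k * Y * (Jm n₂ k)ᴴ) (i, j) (i', j') = if i = k ∧ i' = k then Y j j' else 0 := by
    intro k
    simp only [Matrix.mul_apply, Jm, Matrix.of_apply, Matrix.conjTranspose_apply, Prod.mk.injEq]
    by_cases h1 : i = k <;> by_cases h2 : i' = k <;> simp [h1, h2]
  simp only [this]
  by_cases h : i = i'
  · subst h; simp
  · rw [Matrix.one_apply_ne h, zero_mul, Finset.sum_eq_zero]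
    intro k _
    rw [if_neg]
    rintro ⟨rfl, h'⟩
    exact h h'.symm

theorem Jm_iso (i : n₁) : (Jm n₂ i)ᴴ * Jm n₂ i = 1 := by
  ext j j'
  rw [Matrix.mul_apply, Finset.sum_eq_single (i, j')]
  · simp [Jm, Matrix.one_apply, eq_comm]
  · intro k _ hk
    simp [Jm, hk]
  · simp

theorem phi_posDef [Nonempty n₁] {L : Matrix (n₁ × n₂) (n₁ × n₂) ℂ} (hL : IsUnit L)
    (X : Matrix (n₁ × n₂) (n₁ × n₂) ℂ) (hX : X.PosDef) :
    (Phi (fun i : n₁ => L * Jm n₂ i) X).PosDef := by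
  unfold Phi
  refine Matrix.posDef_sum Finset.univ_nonempty ?_
  intro i _
  have h1 : (Lᴴ * X * L).PosDef := posDef_mul_mul' hX hL
  have h2 : Function.Injective (Jm n₂ i).mulVec := by
    intro u v huv
    have := congrArg ((Jm n₂ i)ᴴ *ᵥ ·) huv
    simpa [Matrix.mulVec_mulVec, Jm_iso] using this
  have := h1.conjTranspose_mul_mul_same h2
  simpa only [Matrix.mul_assoc, Matrix.conjTranspose_mul] using this

theorem kron_posDef {Y : Matrix n₂ n₂ ℂ} (hY : Y.PosDef) :
    ((1 : Matrix n₁ n₁ ℂ) ⊗ₖ Y).PosDef := Matrix.PosDef.one.kronecker hY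

theorem rt_kron (L Z : Matrix (n₁ × n₂) (n₁ × n₂) ℂ) (Y : Matrix n₂ n₂ ℂ) :
    rt (L * ((1 : Matrix n₁ n₁ ℂ) ⊗ₖ Y) * Lᴴ * Z) = rt (Y * Phi (fun i : n₁ => L * Jm n₂ i) Z) := by
  rw [kron_eq]
  simp only [Phi, Finset.mul_sum, Finset.sum_mul, rt_sum]
  refine Finset.sum_congr rfl fun i _ => ?_
  rw [Matrix.conjTranspose_mul]
  calc rt (L * (Jm n₂ i * Y * (Jm n₂ i)ᴴ) * Lᴴ * Z) = rt ((L * Jm n₂ i) * (Y * (Jm n₂ i)ᴴ * Lᴴ * Z)) := by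
        simp only [Matrix.mul_assoc]
    _ = _ := by rw [rt_comm]; simp only [Matrix.mul_assoc]

theorem trp_pos' {n : Type*} [Fintype n] [DecidableEq n] [Nonempty n] {M : Matrix n n ℂ} (hM : M.PosDef) (t : ℝ) : 0 < trp M t := by
  rw [trp_eq hM.1 hM]
  exact Finset.sum_pos (fun i _ => Real.rpow_pos_of_pos (hM.eigenvalues_pos i) _) Finset.univ_nonempty

theorem dens_le [Nonempty n₂] {C Y : Matrix n₂ n₂ ℂ} (hC : C.PosDef) (hY : Y.PosDef) (hC1 : rt C = 1)
    {a : ℝ} (ha : 0 < a) (ha1 : a < 1) :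
    rt (matPow C a * Y) ≤ (trp Y (1/(1-a))) ^ (1-a) := by
  have h1a : 0 < 1 - a := by linarith
  set β := 1/(1-a) with hβ
  have hβ1 : 1 ≤ β := by rw [hβ, le_div_iff₀ h1a]; linarith
  have hβ0 : 0 < β := by linarith
  have hT := trp_pos' hY β
  set T := trp Y β with hTdef
  set l := T ^ (-(1-a)) with hl
  have hl0 : 0 < l := Real.rpow_pos_of_pos hT _
  have h := young_ge (P := l • Y) (hY.smul hl0) hC hβ1
  rw [Matrix.smul_mul, rt_smul, trp_smul hY hl0, hC1] at h
  have e1 : l ^ β * trp Y β = 1 := by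
    rw [hl, ← Real.rpow_mul hT.le, ← hTdef]
    have : -(1-a) * β = -1 := by rw [hβ]; field_simp
    rw [this, Real.rpow_neg_one, inv_mul_cancel₀ hT.ne']
  have e2 : 1 - 1/β = a := by rw [hβ, one_div_one_div]; ring
  rw [e1, e2, rt_comm] at h
  have h2 : β * (l * rt (matPow C a * Y)) ≤ β * 1 := by linarith
  have h3 := le_of_mul_le_mul_left h2 hβ0
  have e3 : T ^ (1-a) * l = 1 := by
    rw [hl, ← Real.rpow_add hT]; simp
  have h4 := mul_le_mul_of_nonneg_left h3 (Real.rpow_pos_of_pos hT (1-a)).le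
  rw [← mul_assoc, e3] at h4
  linarith

theorem dens_eq [Nonempty n₂] {Y : Matrix n₂ n₂ ℂ} (hY : Y.PosDef)
    {a : ℝ} (ha : 0 < a) (ha1 : a < 1) :
    ∃ C : Matrix n₂ n₂ ℂ, C.PosDef ∧ rt C = 1 ∧ rt (matPow C a * Y) = (trp Y (1/(1-a))) ^ (1-a) := by
  have h1a : 0 < 1 - a := by linarith
  set β := 1/(1-a) with hβ
  have hT := trp_pos' hY β
  set T := trp Y β with hTdef
  have hTi : 0 < T⁻¹ := inv_pos.mpr hT
  refine ⟨T⁻¹ • matPow Y β, (matPow_posDef hY β).smul hTi, ?_, ?_⟩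
  · rw [rt_smul, ← trp_eq_rt, ← hTdef, inv_mul_cancel₀ hT.ne']
  · rw [matPow_smul (matPow_posDef hY β) hTi, Matrix.smul_mul, rt_smul, matPow_matPow hY]
    nth_rewrite 2 [← matPow_one hY]
    rw [matPow_mul hY, ← trp_eq_rt]
    have : β * a + 1 = β := by rw [hβ]; field_simp; ring
    rw [this, ← hTdef, Real.inv_rpow hT.le, ← Real.rpow_neg hT.le]
    nth_rewrite 2 [← Real.rpow_one T]
    rw [← Real.rpow_add hT]; congr 1; ring

/-- `W^{1/2} (1 ⊗ B^{b/2} C^a B^{b/2}) W^{1/2}` -/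
noncomputable def gX (a b : ℝ) (W : Matrix (n₁ × n₂) (n₁ × n₂) ℂ) (B C : Matrix n₂ n₂ ℂ) :
    Matrix (n₁ × n₂) (n₁ × n₂) ℂ :=
  matPow W (1/2) * ((1 : Matrix n₁ n₁ ℂ) ⊗ₖ (matPow B (b/2) * matPow C a * matPow B (b/2))) * matPow W (1/2)

theorem gX_posDef (a b : ℝ) {W : Matrix (n₁ × n₂) (n₁ × n₂) ℂ} {B C : Matrix n₂ n₂ ℂ}
    (hW : W.PosDef) (hB : B.PosDef) (hC : C.PosDef) : (gX a b W B C).PosDef :=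
  posDef_sandwich hW (kron_posDef (posDef_sandwich hB (matPow_posDef hC a) _)) _

theorem L9 [Nonempty n₁] [Nonempty n₂] {a b : ℝ} (ha : 0 < a) (hb : 0 < b) (hab : a + b < 1)
    {W : Matrix (n₁ × n₂) (n₁ × n₂) ℂ} (hW : W.PosDef)
    {B₀ B₁ C₀ C₁ : Matrix n₂ n₂ ℂ} (hB₀ : B₀.PosDef) (hB₁ : B₁.PosDef)
    (hC₀ : C₀.PosDef) (hC₁ : C₁.PosDef) (t₀ : rt C₀ = 1) (t₁ : rt C₁ = 1)
    {x y : ℝ} (hx : 0 ≤ x) (hy : 0 ≤ y) (hxy : x + y = 1) :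
    ∃ C : Matrix n₂ n₂ ℂ, C.PosDef ∧ rt C = 1 ∧
      x * trp (gX a b W B₀ C₀) (1/(a+b)) + y * trp (gX a b W B₁ C₁) (1/(a+b)) ≤
        trp (gX a b W (x • B₀ + y • B₁) C) (1/(a+b)) := by
  have hB := posDef_comb hB₀ hB₁ hx hy hxy
  set B := x • B₀ + y • B₁ with hBdef
  have hab0 : 0 < a + b := by linarith
  set β := 1/(a+b) with hβ
  have hβ1 : 1 ≤ β := by rw [hβ, le_div_iff₀ hab0]; linarith
  have hβ0 : β ≠ 0 := by linarith
  set c := 1 - a - b with hc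
  have hc0 : 0 < c := by linarith
  have ec : 1 - 1/β = c := by rw [hβ, one_div_one_div, hc]; ring
  have hX₀ := gX_posDef a b hW hB₀ hC₀
  have hX₁ := gX_posDef a b hW hB₁ hC₁
  set V₀ := matPow (gX a b W B₀ C₀) β with hV₀def
  set V₁ := matPow (gX a b W B₁ C₁) β with hV₁def
  have hV₀ : V₀.PosDef := matPow_posDef hX₀ β
  have hV₁ : V₁.PosDef := matPow_posDef hX₁ β
  have hV := posDef_comb hV₀ hV₁ hx hy hxy
  set V := x • V₀ + y • V₁ with hVdef
  have hW2 := matPow_posDef hW (1/2)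
  set K : n₁ → Matrix (n₁ × n₂) n₂ ℂ := fun i => matPow W (1/2) * Jm n₂ i with hKdef
  have hK : ∀ X, X.PosDef → (Phi K X).PosDef := phi_posDef hW2.isUnit
  have key : ∀ (B' C' : Matrix n₂ n₂ ℂ) (V' : Matrix (n₁ × n₂) (n₁ × n₂) ℂ),
      rt (gX a b W B' C' * matPow V' c) =
        rt (matPow C' a * (matPow B' (b/2) * Phi K (matPow V' c) * matPow B' (b/2))) := by
    intro B' C' V'
    have := rt_kron (matPow W (1/2)) (matPow V' c) (matPow B' (b/2) * matPow C' a * matPow B' (b/2))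
    rw [matPow_herm hW] at this
    unfold gX
    rw [this]
    calc rt (matPow B' (b/2) * matPow C' a * matPow B' (b/2) * Phi K (matPow V' c)) =
        rt (matPow B' (b/2) * (matPow C' a * matPow B' (b/2) * Phi K (matPow V' c))) := by
          simp only [Matrix.mul_assoc]
      _ = _ := by rw [rt_comm]; simp only [Matrix.mul_assoc]
  set Y := matPow B (b/2) * Phi K (matPow V c) * matPow B (b/2) with hYdef
  set Y₀ := matPow B₀ (b/2) * Phi K (matPow V₀ c) * matPow B₀ (b/2) with hY₀def
  set Y₁ := matPow B₁ (b/2) * Phi K (matPow V₁ c) * matPow B₁ (b/2) with hY₁def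
  have hY : Y.PosDef := posDef_sandwich hB (hK _ (matPow_posDef hV c)) _
  have hY₀ : Y₀.PosDef := posDef_sandwich hB₀ (hK _ (matPow_posDef hV₀ c)) _
  have hY₁ : Y₁.PosDef := posDef_sandwich hB₁ (hK _ (matPow_posDef hV₁ c)) _
  have ha1 : a < 1 := by linarith
  obtain ⟨C, hC, t, hCe⟩ := dens_eq hY ha ha1
  refine ⟨C, hC, t, ?_⟩
  have d₀ := dens_le hC₀ hY₀ t₀ ha ha1
  have d₁ := dens_le hC₁ hY₁ t₁ ha ha1
  have conc := L7 K hK hV₀ hV₁ hB₀ hB₁ hb hc0 (by linarith) hx hy hxy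
  have ebc : b + c = 1 - a := by rw [hc]; ring
  rw [ebc] at conc
  have rc := (Real.concaveOn_rpow (p := 1 - a) (by linarith) (by linarith)).2
    (show trp Y₀ (1/(1-a)) ∈ Set.Ici (0:ℝ) from trp_pos hY₀ _) (show trp Y₁ (1/(1-a)) ∈ Set.Ici (0:ℝ) from trp_pos hY₁ _) hx hy hxy
  simp only [smul_eq_mul] at rc
  have rm := Real.rpow_le_rpow (add_nonneg (mul_nonneg hx (trp_pos hY₀ (1/(1-a)))) (mul_nonneg hy (trp_pos hY₁ (1/(1-a))))) conc
    (show 0 ≤ 1 - a by linarith)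
  have main : x * rt (matPow C₀ a * Y₀) + y * rt (matPow C₁ a * Y₁) ≤ rt (matPow C a * Y) := by
    rw [hCe]
    have := mul_le_mul_of_nonneg_left d₀ hx
    have := mul_le_mul_of_nonneg_left d₁ hy
    linarith
  rw [← key, ← key, ← key] at main
  have y₀ := young_eq hX₀ hβ0
  have y₁ := young_eq hX₁ hβ0
  rw [ec] at y₀ y₁
  rw [← hV₀def] at y₀
  rw [← hV₁def] at y₁
  have yg := young_ge (gX_posDef a b hW hB hC) hV hβ1
  rw [ec, hVdef, rt_add, rt_smul, rt_smul, hV₀def, hV₁def, ← trp_eq_rt, ← trp_eq_rt, ← hV₀def, ← hV₁def, ← hVdef] at yg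
  rw [y₀, y₁] at main
  have := mul_le_mul_of_nonneg_left main (show 0 ≤ β by linarith)
  linarith

theorem gX_concave [Nonempty n₁] {a b : ℝ} (ha : 0 < a) (hb : 0 < b) (hab : a + b < 1)
    {W : Matrix (n₁ × n₂) (n₁ × n₂) ℂ} (hW : W.PosDef)
    {B C₀ C₁ : Matrix n₂ n₂ ℂ} (hB : B.PosDef)
    (hC₀ : C₀.PosDef) (hC₁ : C₁.PosDef)
    {x y : ℝ} (hx : 0 ≤ x) (hy : 0 ≤ y) (hxy : x + y = 1) :
      x * trp (gX a b W B C₀) (1/(a+b)) + y * trp (gX a b W B C₁) (1/(a+b)) ≤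
        trp (gX a b W B (x • C₀ + y • C₁)) (1/(a+b)) := by
  set K : n₁ → Matrix n₂ (n₁ × n₂) ℂ := fun i => matPow B (b/2) * (Jm n₂ i)ᴴ * matPow W (1/2) with hKdef
  have hPhi : ∀ X, Phi K X = matPow W (1/2) * ((1 : Matrix n₁ n₁ ℂ) ⊗ₖ (matPow B (b/2) * X * matPow B (b/2))) * matPow W (1/2) := by
    intro X
    rw [kron_eq]
    simp only [Phi, hKdef, Finset.mul_sum, Finset.sum_mul, Matrix.conjTranspose_mul, Matrix.conjTranspose_conjTranspose,
      matPow_herm hW, matPow_herm hB, Matrix.mul_assoc]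
  have hK : ∀ X, X.PosDef → (Phi K X).PosDef := by
    intro X hX
    rw [hPhi]
    exact posDef_sandwich hW (kron_posDef (posDef_sandwich hB hX _)) _
  have h1 : (1 : Matrix (n₁ × n₂) (n₁ × n₂) ℂ).PosDef := Matrix.PosDef.one
  have e1 : matPow (1 : Matrix (n₁ × n₂) (n₁ × n₂) ℂ) (b/2) = 1 := by
    have := matPow_dg (d := fun _ : n₁ × n₂ => (1:ℝ)) (by simp) (b/2)
    simpa [dg_one] using this
  have := L7 K hK hC₀ hC₁ h1 h1 hb ha (by linarith) hx hy hxy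
  rw [← add_smul, hxy, one_smul, e1] at this
  simp only [Matrix.one_mul, Matrix.mul_one, hPhi] at this
  rw [add_comm b a] at this
  exact this

end Tensor

set_option linter.unusedSectionVars false

section Dual

variable {n : Type*} [Fintype n] [DecidableEq n]

theorem half_mul {X : Matrix n n ℂ} (hX : X.PosDef) : matPow X (1/2) * matPow X (1/2) = X := by
  rw [matPow_half hX, matPow_one hX]

theorem trp_swap {M N : Matrix n n ℂ} (hM : M.PosDef) (hN : N.PosDef) (t : ℝ) :
    trp (matPow M (1/2) * N * matPow M (1/2)) t = trp (matPow N (1/2) * M * matPow N (1/2)) t := by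
  refine trp_charpoly (posDef_sandwich hM hN _) (posDef_sandwich hN hM _) ?_ t
  rw [Matrix.mul_assoc, Matrix.charpoly_mul_comm, Matrix.mul_assoc, half_mul hM, Matrix.mul_assoc (matPow N (1/2)),
    Matrix.charpoly_mul_comm (matPow N (1/2)), Matrix.mul_assoc, half_mul hN, Matrix.charpoly_mul_comm]

theorem inv_posDef {E E' : Matrix n n ℂ} (hE : E.PosDef) (h : E * E' = 1) : E' = matPow E (-1) := by
  have h1 : E' * E = 1 := mul_eq_one_comm.mp h
  have h2 : E * matPow E (-1) = 1 := by
    nth_rewrite 1 [← matPow_one hE]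
    exact matPow_mul_neg hE 1
  calc E' = E' * (E * matPow E (-1)) := by rw [h2, Matrix.mul_one]
    _ = _ := by rw [← Matrix.mul_assoc, h1, Matrix.one_mul]

theorem dual_le {L E E' W : Matrix n n ℂ} (hL : IsUnit L) (hE : E.PosDef) (hEE : E * E' = 1) (hW : W.PosDef)
    {α s β : ℝ} (hα : 0 < α) (hα1 : α ≤ 1) (hs : 0 < s) (hβ : 1 ≤ β) (h : 1/α = 1/s + 1/β) :
    trp (L * W * Lᴴ) α ≤ (α/s) * trp (L * E' * Lᴴ) s + (α/β) * trp (matPow W (1/2) * E * matPow W (1/2)) β := by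
  have hE' := inv_posDef hE hEE
  have hE'pd : E'.PosDef := by rw [hE']; exact matPow_posDef hE _
  set G := matPow E (-(1/2)) with hG
  set H := matPow E (1/2) with hH
  have hHG : H * G = 1 := matPow_mul_neg hE _
  have hGh : Gᴴ = G := matPow_herm hE _
  have hHh : Hᴴ = H := matPow_herm hE _
  have hGu : IsUnit G := (matPow_posDef hE _).isUnit
  have hHu : IsUnit H := (matPow_posDef hE _).isUnit
  have hLL : (Lᴴ * L).PosDef := by
    have := posDef_mul_mul' (Matrix.PosDef.one : (1 : Matrix n n ℂ).PosDef) hL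
    simpa using this
  have hGG : G * G = E' := by
    rw [hG, matPow_mul hE, hE']; congr 1; norm_num
  have h1 := holder_le (posDef_mul_mul hW hHu) (posDef_mul_mul' hLL hGu) hα hα1 hs hβ h
  rw [trp_sim hLL hW hHG] at h1
  have e1 : trp (matPow (Lᴴ * L) (1/2) * W * matPow (Lᴴ * L) (1/2)) α = trp (L * W * Lᴴ) α := by
    refine trp_charpoly (posDef_sandwich hLL hW _) (posDef_mul_mul hW hL) ?_ _
    rw [Matrix.mul_assoc, Matrix.charpoly_mul_comm, Matrix.mul_assoc, half_mul hLL, Matrix.mul_assoc L,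
      Matrix.charpoly_mul_comm L, Matrix.mul_assoc]
  have e2 : trp (Gᴴ * (Lᴴ * L) * G) s = trp (L * E' * Lᴴ) s := by
    refine trp_charpoly (posDef_mul_mul' hLL hGu) (posDef_mul_mul hE'pd hL) ?_ _
    rw [Matrix.charpoly_mul_comm, ← Matrix.mul_assoc, hGh, hGG, Matrix.mul_assoc L, Matrix.charpoly_mul_comm L, Matrix.mul_assoc]
  have e3 : trp (H * W * Hᴴ) β = trp (matPow W (1/2) * E * matPow W (1/2)) β := by
    rw [hHh, hH, trp_swap hE hW]
  rw [e1, e2, e3] at h1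
  exact h1

theorem dual_eq {L E E' : Matrix n n ℂ} (hL : IsUnit L) (hE : E.PosDef) (hEE : E * E' = 1)
    {α s β : ℝ} (hα : 0 < α) (hs : 0 < s) (hβ : 0 < β) (h : 1/α = 1/s + 1/β) :
    ∃ W : Matrix n n ℂ, W.PosDef ∧ trp (L * W * Lᴴ) α = trp (L * E' * Lᴴ) s ∧
      trp (matPow W (1/2) * E * matPow W (1/2)) β = trp (L * E' * Lᴴ) s := by
  have hE' := inv_posDef hE hEE
  have hE'pd : E'.PosDef := by rw [hE']; exact matPow_posDef hE _
  have hE'E : E' * E = 1 := mul_eq_one_comm.mp hEE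
  obtain ⟨⟨L0, M, hLM, hML⟩, rfl⟩ := hL
  simp only at *
  have hMu : IsUnit M := IsUnit.of_mul_eq_one _ hML
  have hLu : IsUnit L0 := IsUnit.of_mul_eq_one _ hLM
  set P := L0 * E' * L0ᴴ with hPdef
  have hP : P.PosDef := posDef_mul_mul hE'pd hLu
  have hMLh : L0ᴴ * Mᴴ = 1 := by rw [← Matrix.conjTranspose_mul, hML, Matrix.conjTranspose_one]
  have hLMh : Mᴴ * L0ᴴ = 1 := mul_eq_one_comm.mp hMLh
  have hW : (M * matPow P (s/α) * Mᴴ).PosDef := posDef_mul_mul (matPow_posDef hP _) hMu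
  refine ⟨M * matPow P (s/α) * Mᴴ, hW, ?_, ?_⟩
  · have : L0 * (M * matPow P (s/α) * Mᴴ) * L0ᴴ = matPow P (s/α) := by
      calc _ = (L0 * M) * matPow P (s/α) * (Mᴴ * L0ᴴ) := by simp only [Matrix.mul_assoc]
        _ = _ := by rw [hLM, hLMh, Matrix.one_mul, Matrix.mul_one]
    rw [this, trp_matPow hP]; congr 1; field_simp
  · have hinv : Mᴴ * E * M = matPow P (-1) := by
      refine inv_posDef hP ?_
      rw [hPdef]
      calc _ = L0 * E' * (L0ᴴ * Mᴴ) * E * M := by simp only [Matrix.mul_assoc]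
        _ = L0 * (E' * E) * M := by rw [hMLh, Matrix.mul_one]; simp only [Matrix.mul_assoc]
        _ = 1 := by rw [hE'E, Matrix.mul_one, hLM]
    have : trp (matPow (M * matPow P (s/α) * Mᴴ) (1/2) * E * matPow (M * matPow P (s/α) * Mᴴ) (1/2)) β
        = trp (matPow P (s/β)) β := by
      refine trp_charpoly (posDef_sandwich hW hE _) (matPow_posDef hP _) ?_ _
      rw [Matrix.mul_assoc, Matrix.charpoly_mul_comm, Matrix.mul_assoc, half_mul hW]
      have e : s/β = -1 + s/α := by
        have : s * (1/α) = s * (1/s+1/β) := by rw [h]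
        have h2 : s * (1/s + 1/β) = 1 + s/β := by field_simp
        rw [h2] at this
        have h3 : s * (1/α) = s/α := by ring
        linarith
      rw [e, ← matPow_mul hP, ← hinv]
      calc (E * (M * matPow P (s/α) * Mᴴ)).charpoly = ((E * M * matPow P (s/α)) * Mᴴ).charpoly := by
            simp only [Matrix.mul_assoc]
        _ = _ := by rw [Matrix.charpoly_mul_comm]; simp only [Matrix.mul_assoc]
    rw [this, trp_matPow hP]; congr 1; field_simp

/-- mixed densities -/
def Xset (n : Type*) [Fintype n] [DecidableEq n] (l : ℝ) : Set (Matrix n n ℂ) :=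
  (fun D : Matrix n n ℂ => l • D + ((1-l) * (Fintype.card n : ℝ)⁻¹) • (1 : Matrix n n ℂ)) ''
    {D | D.PosSemidef ∧ D.trace = 1}

theorem psd_factor {D : Matrix n n ℂ} (hD : D.PosSemidef) : ∃ G : Matrix n n ℂ, D = Gᴴ * G := by
  have h : D = (hD.1.eigenvectorUnitary : Matrix n n ℂ) * dg (hD.1.eigenvalues) * (hD.1.eigenvectorUnitary : Matrix n n ℂ)ᴴ := by
    have := hD.1.spectral_theorem
    rw [Unitary.conjStarAlgAut_apply] at this
    exact this
  set U := (hD.1.eigenvectorUnitary : Matrix n n ℂ)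
  refine ⟨dg (fun i => Real.sqrt (hD.1.eigenvalues i)) * Uᴴ, ?_⟩
  have e : (dg (fun i => Real.sqrt (hD.1.eigenvalues i)))ᴴ = dg (fun i => Real.sqrt (hD.1.eigenvalues i)) := by
    rw [dg, Matrix.diagonal_conjTranspose]
    congr 1
    ext i
    simp
  rw [Matrix.conjTranspose_mul, Matrix.conjTranspose_conjTranspose, e, Matrix.mul_assoc, ← Matrix.mul_assoc (dg _), dg_mul,
    ← Matrix.mul_assoc]
  simp only [Real.mul_self_sqrt (hD.eigenvalues_nonneg _)]
  exact h

theorem dens_compact : IsCompact {D : Matrix n n ℂ | D.PosSemidef ∧ D.trace = 1} := by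
  have h1 : IsCompact {G : Matrix n n ℂ | (Gᴴ * G).trace = 1} := by
    have hc : IsCompact (Set.univ.pi fun _ : n => Set.univ.pi fun _ : n => Metric.closedBall (0:ℂ) 1) :=
      isCompact_univ_pi fun _ => isCompact_univ_pi fun _ => isCompact_closedBall 0 1
    have hcl : IsClosed {G : Matrix n n ℂ | (Gᴴ * G).trace = 1} := by
      refine isClosed_eq ?_ continuous_const
      exact (continuous_id.matrix_conjTranspose.matrix_mul continuous_id).matrix_trace
    refine IsCompact.of_isClosed_subset hc hcl ?_
    intro G hG i _ j _
    have hG' : (Gᴴ * G).trace = 1 := hG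
    have hs : ∑ j, ∑ i, Complex.normSq (G i j) = 1 := by
      have := congrArg Complex.re hG'
      simp only [Matrix.trace, Matrix.diag, Matrix.mul_apply, Matrix.conjTranspose_apply, Complex.re_sum, Complex.one_re] at this
      rw [← this]
      refine Finset.sum_congr rfl fun j _ => Finset.sum_congr rfl fun i _ => ?_
      simp [Complex.normSq_apply]
    have h1 : Complex.normSq (G i j) ≤ 1 := by
      rw [← hs]
      refine le_trans ?_ (Finset.single_le_sum (f := fun j => ∑ i, Complex.normSq (G i j)) (fun j _ => Finset.sum_nonneg fun i _ => Complex.normSq_nonneg _) (Finset.mem_univ j))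
      exact Finset.single_le_sum (f := fun i => Complex.normSq (G i j)) (fun i _ => Complex.normSq_nonneg _) (Finset.mem_univ i)
    rw [Complex.normSq_eq_norm_sq] at h1
    rw [mem_closedBall_zero_iff]
    nlinarith [norm_nonneg (G i j)]
  have h2 : {D : Matrix n n ℂ | D.PosSemidef ∧ D.trace = 1} = (fun G : Matrix n n ℂ => Gᴴ * G) '' {G | (Gᴴ * G).trace = 1} := by
    ext D
    constructor
    · rintro ⟨hD, ht⟩
      obtain ⟨G, rfl⟩ := psd_factor hD
      exact ⟨G, ht, rfl⟩
    · rintro ⟨G, hG, rfl⟩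
      exact ⟨Matrix.posSemidef_conjTranspose_mul_self G, hG⟩
  rw [h2]
  exact h1.image (continuous_id.matrix_conjTranspose.matrix_mul continuous_id)

theorem dens_convex : Convex ℝ {D : Matrix n n ℂ | D.PosSemidef ∧ D.trace = 1} := by
  rintro D₀ ⟨h0, t0⟩ D₁ ⟨h1, t1⟩ x y hx hy hxy
  refine ⟨(h0.smul hx).add (h1.smul hy), ?_⟩
  rw [Matrix.trace_add, Matrix.trace_smul, Matrix.trace_smul, t0, t1, ← add_smul, hxy, one_smul]

theorem Xset_compact (l : ℝ) : IsCompact (Xset n l) := by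
  refine dens_compact.image ?_
  exact (continuous_id.const_smul l).add continuous_const

theorem Xset_convex (l : ℝ) : Convex ℝ (Xset n l) := by
  rintro _ ⟨D₀, h0, rfl⟩ _ ⟨D₁, h1, rfl⟩ x y hx hy hxy
  refine ⟨x • D₀ + y • D₁, dens_convex h0 h1 hx hy hxy, ?_⟩
  have hy' : y = 1 - x := by linarith
  subst hy'
  module

theorem Xset_posDef [Nonempty n] {l : ℝ} (h0 : 0 ≤ l) (h1 : l < 1) {C : Matrix n n ℂ} (hC : C ∈ Xset n l) :
    C.PosDef ∧ C.trace = 1 := by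
  obtain ⟨D, ⟨hD, t⟩, rfl⟩ := hC
  have hcard : (0:ℝ) < Fintype.card n := by exact_mod_cast Fintype.card_pos
  constructor
  · refine Matrix.PosDef.posSemidef_add (hD.smul h0) ?_
    exact Matrix.PosDef.one.smul (mul_pos (by linarith) (inv_pos.mpr hcard))
  · simp only
    rw [Matrix.trace_add, Matrix.trace_smul, Matrix.trace_smul, t, Matrix.trace_one]
    simp only [Complex.real_smul]
    push_cast
    have : (Fintype.card n : ℂ) ≠ 0 := by exact_mod_cast hcard.ne'
    field_simp
    ring

theorem trace_of_rt {C : Matrix n n ℂ} (hC : C.PosDef) (h : rt C = 1) : C.trace = 1 := by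
  have h1 : star C.trace = C.trace := by rw [← Matrix.trace_conjTranspose, hC.1]
  apply Complex.ext
  · exact h
  · have := Complex.conj_eq_iff_im.mp h1
    simpa using this

end Dual

set_option linter.unusedSectionVars false

section Final

variable {n₁ n₂ : Type*} [Fintype n₁] [DecidableEq n₁] [Fintype n₂] [DecidableEq n₂]

/-- `1 ⊗ B^{b/2} C^a B^{b/2}` -/
noncomputable def Ef (n₁ : Type*) [Fintype n₁] [DecidableEq n₁] (a b : ℝ) (B C : Matrix n₂ n₂ ℂ) :
    Matrix (n₁ × n₂) (n₁ × n₂) ℂ :=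
  (1 : Matrix n₁ n₁ ℂ) ⊗ₖ (matPow B (b/2) * matPow C a * matPow B (b/2))

theorem Ef_posDef (a b : ℝ) {B C : Matrix n₂ n₂ ℂ} (hB : B.PosDef) (hC : C.PosDef) : (Ef n₁ a b B C).PosDef :=
  kron_posDef (posDef_sandwich hB (matPow_posDef hC a) _)

theorem Ef_inv (a b : ℝ) {B C : Matrix n₂ n₂ ℂ} (hB : B.PosDef) (hC : C.PosDef) :
    Ef n₁ a b B C * Ef n₁ (-a) (-b) B C = 1 := by
  unfold Ef
  rw [← Matrix.mul_kronecker_mul, Matrix.one_mul, neg_div]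
  have : matPow B (b/2) * matPow C a * matPow B (b/2) * (matPow B (-(b/2)) * matPow C (-a) * matPow B (-(b/2))) = 1 := by
    calc _ = matPow B (b/2) * (matPow C a * (matPow B (b/2) * matPow B (-(b/2))) * matPow C (-a)) * matPow B (-(b/2)) := by
          simp only [Matrix.mul_assoc]
      _ = 1 := by rw [matPow_mul_neg hB, Matrix.mul_one, matPow_mul_neg hC, Matrix.mul_one, matPow_mul_neg hB]
  rw [this, Matrix.one_kronecker_one]

theorem gX_eq (a b : ℝ) (W : Matrix (n₁ × n₂) (n₁ × n₂) ℂ) (B C : Matrix n₂ n₂ ℂ) :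
    gX a b W B C = matPow W (1/2) * Ef n₁ a b B C * matPow W (1/2) := rfl

theorem gX_smul (a b : ℝ) {W : Matrix (n₁ × n₂) (n₁ × n₂) ℂ} (hW : W.PosDef) (B C : Matrix n₂ n₂ ℂ) {c : ℝ} (hc : 0 < c) :
    gX a b (c • W) B C = c • gX a b W B C := by
  unfold gX
  rw [matPow_smul hW hc, Matrix.smul_mul, Matrix.smul_mul, Matrix.mul_smul, smul_smul, ← Real.rpow_add hc]
  norm_num

theorem kron_cont : Continuous (fun Y : Matrix n₂ n₂ ℂ => (1 : Matrix n₁ n₁ ℂ) ⊗ₖ Y) := by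
  refine continuous_matrix fun i j => ?_
  simp only [Matrix.kroneckerMap_apply]
  exact continuous_const.mul (continuous_id.matrix_elem _ _)

theorem trp_comp {X n : Type*} [TopologicalSpace X] [Fintype n] [DecidableEq n] {f : X → Matrix n n ℂ} {S : Set X}
    (t : ℝ) (hf : ContinuousOn f S) (h : ∀ x ∈ S, (f x).PosDef) : ContinuousOn (fun x => trp (f x) t) S :=
  ContinuousOn.comp (g := fun M : Matrix n n ℂ => trp M t) (t := {M | M.PosDef}) (trp_contOn t) hf h

theorem gX_contC (a b β : ℝ) {W : Matrix (n₁ × n₂) (n₁ × n₂) ℂ} (hW : W.PosDef) {B : Matrix n₂ n₂ ℂ} (hB : B.PosDef) :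
    ContinuousOn (fun C => trp (gX a b W B C) β) {C | C.PosDef} := by
  refine trp_comp β ?_ (fun C hC => gX_posDef a b hW hB hC)
  unfold gX
  have h1 : Continuous (fun X : Matrix n₂ n₂ ℂ => matPow W (1/2) * ((1 : Matrix n₁ n₁ ℂ) ⊗ₖ (matPow B (b/2) * X * matPow B (b/2))) * matPow W (1/2)) := by
    refine (continuous_const.matrix_mul (kron_cont.comp ?_)).matrix_mul continuous_const
    exact (continuous_const.matrix_mul continuous_id).matrix_mul continuous_const
  exact h1.comp_continuousOn (matPow_contOn a)

theorem gX_contW (a b β : ℝ) {B C : Matrix n₂ n₂ ℂ} (hB : B.PosDef) (hC : C.PosDef) :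
    ContinuousOn (fun W : Matrix (n₁ × n₂) (n₁ × n₂) ℂ => trp (gX a b W B C) β) {W | W.PosDef} := by
  refine trp_comp β ?_ (fun W hW => gX_posDef a b hW hB hC)
  unfold gX
  have h1 : Continuous (fun X : Matrix (n₁ × n₂) (n₁ × n₂) ℂ => X * ((1 : Matrix n₁ n₁ ℂ) ⊗ₖ (matPow B (b/2) * matPow C a * matPow B (b/2))) * X) :=
    (continuous_id.matrix_mul continuous_const).matrix_mul continuous_id
  exact h1.comp_continuousOn (matPow_contOn (1/2))

theorem gX_convexW (a b : ℝ) {β : ℝ} (hβ : 1 ≤ β) {B C : Matrix n₂ n₂ ℂ} (hB : B.PosDef) (hC : C.PosDef)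
    {W₀ W₁ : Matrix (n₁ × n₂) (n₁ × n₂) ℂ} (h₀ : W₀.PosDef) (h₁ : W₁.PosDef)
    {x y : ℝ} (hx : 0 ≤ x) (hy : 0 ≤ y) (hxy : x + y = 1) :
    trp (gX a b (x • W₀ + y • W₁) B C) β ≤ x * trp (gX a b W₀ B C) β + y * trp (gX a b W₁ B C) β := by
  have hE : (Ef n₁ a b B C).PosDef := Ef_posDef a b hB hC
  rw [gX_eq, gX_eq, gX_eq, trp_swap (posDef_comb h₀ h₁ hx hy hxy) hE, trp_swap h₀ hE, trp_swap h₁ hE]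
  have := trp_convex (posDef_sandwich hE h₀ (1/2)) (posDef_sandwich hE h₁ (1/2)) hβ hx hy hxy
  refine le_trans (le_of_eq ?_) this
  congr 1
  simp only [Matrix.mul_add, Matrix.add_mul, Matrix.mul_smul, Matrix.smul_mul]

theorem T_contW (α : ℝ) {L : Matrix (n₁ × n₂) (n₁ × n₂) ℂ} (hL : IsUnit L) :
    ContinuousOn (fun W : Matrix (n₁ × n₂) (n₁ × n₂) ℂ => trp (L * W * Lᴴ) α) {W | W.PosDef} := by
  refine trp_comp α ?_ (fun W hW => posDef_mul_mul hW hL)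
  exact ((continuous_const.matrix_mul continuous_id).matrix_mul continuous_const).continuousOn

theorem T_concaveW {α : ℝ} (hα : 0 < α) (hα1 : α ≤ 1) {L : Matrix (n₁ × n₂) (n₁ × n₂) ℂ} (hL : IsUnit L)
    {W₀ W₁ : Matrix (n₁ × n₂) (n₁ × n₂) ℂ} (h₀ : W₀.PosDef) (h₁ : W₁.PosDef)
    {x y : ℝ} (hx : 0 ≤ x) (hy : 0 ≤ y) (hxy : x + y = 1) :
    x * trp (L * W₀ * Lᴴ) α + y * trp (L * W₁ * Lᴴ) α ≤ trp (L * (x • W₀ + y • W₁) * Lᴴ) α := by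
  have := trp_concave (posDef_mul_mul h₀ hL) (posDef_mul_mul h₁ hL) hα hα1 hx hy hxy
  refine le_trans this (le_of_eq ?_)
  congr 1
  simp only [Matrix.mul_add, Matrix.add_mul, Matrix.mul_smul, Matrix.smul_mul]

theorem posDef_convex {n : Type*} [Fintype n] [DecidableEq n] : Convex ℝ {M : Matrix n n ℂ | M.PosDef} := by
  intro M hM N hN x y hx hy hxy
  exact posDef_comb hM hN hx hy hxy

theorem minimax [Nonempty n₁] [Nonempty n₂] {a b : ℝ} (ha : 0 < a) (hb : 0 < b) (hab : a + b < 1)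
    {α u v l R : ℝ} (hα : 0 < α) (hα1 : α ≤ 1) (hu : 0 ≤ u) (hv : 0 ≤ v) (hl0 : 0 ≤ l) (hl1 : l < 1)
    {L : Matrix (n₁ × n₂) (n₁ × n₂) ℂ} (hL : IsUnit L) {B : Matrix n₂ n₂ ℂ} (hB : B.PosDef)
    (H : ∀ W : Matrix (n₁ × n₂) (n₁ × n₂) ℂ, W.PosDef → ∃ C ∈ Xset n₂ l,
      u * trp (L * W * Lᴴ) α - v * trp (gX a b W B C) (1/(a+b)) ≤ R) :
    ∃ C ∈ Xset n₂ l, ∀ W : Matrix (n₁ × n₂) (n₁ × n₂) ℂ, W.PosDef →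
      u * trp (L * W * Lᴴ) α - v * trp (gX a b W B C) (1/(a+b)) ≤ R := by
  have hβ : 1 ≤ 1/(a+b) := by rw [le_div_iff₀ (by linarith)]; linarith
  by_contra hcon
  push Not at hcon
  have hXY : Xset n₂ l ⊆ {C | C.PosDef} := fun C hC => (Xset_posDef hl0 hl1 hC).1
  have cC : ∀ W ∈ {W : Matrix (n₁ × n₂) (n₁ × n₂) ℂ | W.PosDef},
      ContinuousOn (fun C => u * trp (L * W * Lᴴ) α - v * trp (gX a b W B C) (1/(a+b))) (Xset n₂ l) := by
    intro W hW
    exact continuousOn_const.sub (continuousOn_const.mul ((gX_contC a b _ hW hB).mono hXY))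
  choose! w hw hwR using hcon
  obtain ⟨T, hT, hTc⟩ := (Xset_compact (n := n₂) l).elim_nhdsWithin_subcover
    (fun C => {C' | R < u * trp (L * w C * Lᴴ) α - v * trp (gX a b (w C) B C') (1/(a+b))})
    (fun C hC => (cC (w C) (hw C hC) C hC).eventually (lt_mem_nhds (hwR C hC)))
  have hne : (Xset n₂ l).Nonempty := by
    obtain ⟨C, hC, _⟩ := H 1 Matrix.PosDef.one
    exact ⟨C, hC⟩
  obtain ⟨W, hW, hWR⟩ := Sion.exists_lt_iInf_of_lt_iInf_of_finite (X := Xset n₂ l)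
    (Y := {W : Matrix (n₁ × n₂) (n₁ × n₂) ℂ | W.PosDef})
    (f := fun C W => u * trp (L * W * Lᴴ) α - v * trp (gX a b W B C) (1/(a+b)))
    hne (Xset_compact l) (fun W hW => (cC W hW).lowerSemicontinuousOn)
    (fun W hW => by
      refine ConvexOn.quasiconvexOn ⟨Xset_convex l, ?_⟩
      intro C hC C' hC' x y hx hy hxy
      have := gX_concave ha hb hab hW hB (hXY hC) (hXY hC') hx hy hxy
      have := mul_le_mul_of_nonneg_left this hv
      simp only [smul_eq_mul]
      have e : u * trp (L * W * Lᴴ) α = x * (u * trp (L * W * Lᴴ) α) + y * (u * trp (L * W * Lᴴ) α) := by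
        rw [← add_mul, hxy, one_mul]
      linarith)
    posDef_convex
    (fun C hC => by
      refine ContinuousOn.upperSemicontinuousOn ?_
      exact (continuousOn_const.mul (T_contW α hL)).sub (continuousOn_const.mul (gX_contW a b _ hB (hXY hC))))
    (fun C hC => by
      refine ConcaveOn.quasiconcaveOn ⟨posDef_convex, ?_⟩
      intro W hW W' hW' x y hx hy hxy
      have h1 := mul_le_mul_of_nonneg_left (gX_convexW a b hβ hB (hXY hC) hW hW' hx hy hxy) hv
      have h2 := mul_le_mul_of_nonneg_left (T_concaveW hα hα1 hL hW hW' hx hy hxy) hu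
      simp only [smul_eq_mul]
      linarith)
    (Xset_convex l) (s := w '' (T : Set (Matrix n₂ n₂ ℂ))) (T.finite_toSet.image w)
    (by rintro _ ⟨C, hC, rfl⟩; exact hw C (hT C hC))
    (t := R)
    (by
      intro C hC
      obtain ⟨C', hC', h⟩ := Set.mem_iUnion₂.mp (hTc hC)
      exact ⟨w C', ⟨C', hC', rfl⟩, h⟩)
  obtain ⟨C, hC, h⟩ := H W hW
  exact absurd (hWR C hC) (not_lt.mpr h)

theorem T_convexA {A₀ A₁ K W : Matrix (n₁ × n₂) (n₁ × n₂) ℂ} (hA₀ : A₀.PosDef) (hA₁ : A₁.PosDef) (hK : IsUnit K)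
    (hW : W.PosDef) {p α : ℝ} (hp : p ∈ Set.Icc (1:ℝ) 2) (hα : 1/p ≤ α) (hα1 : α ≤ 1)
    {x y : ℝ} (hx : 0 ≤ x) (hy : 0 ≤ y) (hxy : x + y = 1) :
    trp ((matPow (x • A₀ + y • A₁) (p/2) * K) * W * (matPow (x • A₀ + y • A₁) (p/2) * K)ᴴ) α ≤
      x * trp ((matPow A₀ (p/2) * K) * W * (matPow A₀ (p/2) * K)ᴴ) α +
      y * trp ((matPow A₁ (p/2) * K) * W * (matPow A₁ (p/2) * K)ᴴ) α := by
  have hWu : IsUnit (matPow W (1/2)) := (matPow_posDef hW _).isUnit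
  have hKW : IsUnit (K * matPow W (1/2)) := hK.mul hWu
  have key : ∀ A : Matrix (n₁ × n₂) (n₁ × n₂) ℂ, A.PosDef →
      trp ((matPow A (p/2) * K) * W * (matPow A (p/2) * K)ᴴ) α =
        trp ((K * matPow W (1/2))ᴴ * matPow A p * (K * matPow W (1/2))) α := by
    intro A hA
    have hL : IsUnit (matPow A (p/2) * K) := (matPow_posDef hA _).isUnit.mul hK
    refine trp_charpoly (posDef_mul_mul hW hL) (posDef_mul_mul' (matPow_posDef hA p) hKW) ?_ _
    rw [Matrix.conjTranspose_mul, Matrix.conjTranspose_mul, matPow_herm hA, matPow_herm hW, ← matPow_half hA p]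
    nth_rewrite 1 [← half_mul hW]
    calc (matPow A (p/2) * K * (matPow W (1/2) * matPow W (1/2)) * (Kᴴ * matPow A (p/2))).charpoly
        = ((matPow A (p/2) * K * matPow W (1/2)) * (matPow W (1/2) * Kᴴ * matPow A (p/2))).charpoly := by
          simp only [Matrix.mul_assoc]
      _ = _ := by rw [Matrix.charpoly_mul_comm]; simp only [Matrix.mul_assoc]
  rw [key _ (posDef_comb hA₀ hA₁ hx hy hxy), key _ hA₀, key _ hA₁]
  exact L8 hA₀ hA₁ hKW hp hα hα1 hx hy hxy

theorem main_mu [Nonempty n₁] [Nonempty n₂] {K : Matrix (n₁ × n₂) (n₁ × n₂) ℂ} (hK : IsUnit K)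
    {p a b s α μ : ℝ} (hp : p ∈ Set.Icc (1:ℝ) 2) (ha : 0 < a) (hb : 0 < b) (hab : a + b < 1) (hs : 0 < s)
    (hα : 0 < α) (hαp : 1/p ≤ α) (hα1 : α ≤ 1) (h : 1/α = 1/s + (a+b)) (hμ : 0 < μ) (hμ1 : μ < 1)
    {A₀ A₁ : Matrix (n₁ × n₂) (n₁ × n₂) ℂ} (hA₀ : A₀.PosDef) (hA₁ : A₁.PosDef)
    {B₀ B₁ C₀ C₁ : Matrix n₂ n₂ ℂ} (hB₀ : B₀.PosDef) (hB₁ : B₁.PosDef)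
    (hC₀ : C₀.PosDef) (hC₁ : C₁.PosDef) (t₀ : rt C₀ = 1) (t₁ : rt C₁ = 1)
    {x y : ℝ} (hx : 0 ≤ x) (hy : 0 ≤ y) (hxy : x + y = 1) :
    ∃ C : Matrix n₂ n₂ ℂ, C.PosDef ∧ C.trace = 1 ∧
      μ ^ α * trp ((matPow (x • A₀ + y • A₁) (p/2) * K) * Ef n₁ (-a) (-b) (x • B₀ + y • B₁) C *
        (matPow (x • A₀ + y • A₁) (p/2) * K)ᴴ) s ≤
      x * trp ((matPow A₀ (p/2) * K) * Ef n₁ (-a) (-b) B₀ C₀ * (matPow A₀ (p/2) * K)ᴴ) s +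
      y * trp ((matPow A₁ (p/2) * K) * Ef n₁ (-a) (-b) B₁ C₁ * (matPow A₁ (p/2) * K)ᴴ) s := by
  have hab0 : 0 < a + b := by linarith
  have hA := posDef_comb hA₀ hA₁ hx hy hxy
  have hB := posDef_comb hB₀ hB₁ hx hy hxy
  set A := x • A₀ + y • A₁ with hAdef
  set B := x • B₀ + y • B₁ with hBdef
  set β := 1/(a+b) with hβ
  have hβ1 : 1 < β := by rw [hβ, lt_div_iff₀ hab0]; linarith
  have hβ0 : 0 < β := by linarith
  have hαβ : 1/α = 1/s + 1/β := by rw [h, hβ, one_div_one_div]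
  set l := μ ^ (β - α) with hl
  have hl0 : 0 < l := Real.rpow_pos_of_pos hμ _
  have hl1 : l < 1 := Real.rpow_lt_one hμ.le hμ1 (by linarith)
  have hm0 : 0 < μ ^ α := Real.rpow_pos_of_pos hμ _
  have hml : μ ^ β = μ ^ α * l := by rw [hl, ← Real.rpow_add hμ]; congr 1; ring
  have hLu : ∀ A' : Matrix (n₁ × n₂) (n₁ × n₂) ℂ, A'.PosDef → IsUnit (matPow A' (p/2) * K) :=
    fun A' hA' => (matPow_posDef hA' _).isUnit.mul hK
  set F₀ := trp ((matPow A₀ (p/2) * K) * Ef n₁ (-a) (-b) B₀ C₀ * (matPow A₀ (p/2) * K)ᴴ) s with hF₀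
  set F₁ := trp ((matPow A₁ (p/2) * K) * Ef n₁ (-a) (-b) B₁ C₁ * (matPow A₁ (p/2) * K)ᴴ) s with hF₁
  have hd : ∀ {A' : Matrix (n₁ × n₂) (n₁ × n₂) ℂ} {B' C' : Matrix n₂ n₂ ℂ} {W : Matrix (n₁ × n₂) (n₁ × n₂) ℂ},
      A'.PosDef → B'.PosDef → C'.PosDef → W.PosDef →
      μ ^ α * ((s/α) * trp ((matPow A' (p/2) * K) * W * (matPow A' (p/2) * K)ᴴ) α
        - (s/β) * (l * trp (gX a b W B' C') β)) ≤
      trp ((matPow A' (p/2) * K) * Ef n₁ (-a) (-b) B' C' * (matPow A' (p/2) * K)ᴴ) s := by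
    intro A' B' C' W hA' hB' hC' hW
    have h1 := dual_le (hLu A' hA') (Ef_posDef (n₁ := n₁) a b hB' hC') (Ef_inv a b hB' hC') (hW.smul hμ) hα hα1 hs hβ1.le hαβ
    rw [← gX_eq, gX_smul a b hW _ _ hμ, trp_smul (gX_posDef a b hW hB' hC') hμ, Matrix.mul_smul, Matrix.smul_mul,
      trp_smul (posDef_mul_mul hW (hLu A' hA')) hμ, hml] at h1
    have h2 := mul_le_mul_of_nonneg_left h1 (show 0 ≤ s/α by positivity)
    have e1 : s/α * (α/s) = 1 := by field_simp
    have e2 : s/α * (α/β) = s/β := by field_simp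
    rw [mul_add, ← mul_assoc (s/α) (α/s), e1, ← mul_assoc (s/α) (α/β), e2] at h2
    linarith
  have hcard : (0:ℝ) < Fintype.card n₂ := by exact_mod_cast Fintype.card_pos
  obtain ⟨C, hC, hCW⟩ := minimax (n₁ := n₁) (l := l) (u := s/α) (v := s/β) (R := (μ ^ α)⁻¹ * (x * F₀ + y * F₁)) ha hb hab hα hα1
    (by positivity) (by positivity) hl0.le hl1 (hLu A hA) hB (by
      intro W hW
      obtain ⟨C', hC', t', hg⟩ := L9 ha hb hab hW hB₀ hB₁ hC₀ hC₁ t₀ t₁ hx hy hxy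
      refine ⟨_, ⟨C', ⟨hC'.posSemidef, trace_of_rt hC' t'⟩, rfl⟩, ?_⟩
      have h1 : ((Fintype.card n₂ : ℝ)⁻¹ • (1 : Matrix n₂ n₂ ℂ)).PosDef := Matrix.PosDef.one.smul (inv_pos.mpr hcard)
      have hc := gX_concave ha hb hab hW hB hC' h1 hl0.le (sub_nonneg.mpr hl1.le) (by ring)
      rw [smul_smul] at hc
      have hnn := mul_nonneg (sub_nonneg.mpr hl1.le) (trp_pos (gX_posDef a b hW hB h1) (1/(a+b)))
      have hT := T_convexA hA₀ hA₁ hK hW hp hαp hα1 hx hy hxy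
      have d₀ := mul_le_mul_of_nonneg_left (hd hA₀ hB₀ hC₀ hW) hx
      have d₁ := mul_le_mul_of_nonneg_left (hd hA₁ hB₁ hC₁ hW) hy
      rw [inv_mul_eq_div, le_div_iff₀ hm0, mul_comm]
      simp only [← hβ, ← hBdef, ← hAdef] at *
      refine le_trans ?_ (add_le_add d₀ d₁)
      have hg2 := mul_le_mul_of_nonneg_left hg hl0.le
      have hg3 := mul_le_mul_of_nonneg_left (show l * (x * trp (gX a b W B₀ C₀) β + y * trp (gX a b W B₁ C₁) β) ≤ trp (gX a b W B (l • C' + ((1 - l) * (Fintype.card n₂ : ℝ)⁻¹) • 1)) β by linarith) (show 0 ≤ s/β by positivity)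
      have hT2 := mul_le_mul_of_nonneg_left hT (show 0 ≤ s/α by positivity)
      have := mul_le_mul_of_nonneg_left (sub_le_sub hT2 hg3) hm0.le
      refine le_trans this (le_of_eq ?_)
      ring)
  obtain ⟨hCp, hCt⟩ := Xset_posDef hl0.le hl1 hC
  refine ⟨C, hCp, hCt, ?_⟩
  obtain ⟨W, hW, e1, e2⟩ := dual_eq (hLu A hA) (Ef_posDef (n₁ := n₁) a b hB hCp) (Ef_inv a b hB hCp) hα hs hβ0 hαβ
  have := hCW W hW
  rw [gX_eq, ← hβ, e1, e2, ← sub_mul] at this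
  have e : s/α - s/β = 1 := by
    have h2 : s * (1/α) = s * (1/s+1/β) := by rw [hαβ]
    have h3 : s * (1/s + 1/β) = 1 + s/β := by field_simp
    have h4 : s * (1/α) = s/α := by ring
    linarith
  rw [e, one_mul, inv_mul_eq_div, le_div_iff₀ hm0, mul_comm] at this
  exact this

end Final

theorem Q_eq {n₁ n₂ : Type*} [Fintype n₁] [DecidableEq n₁]
    [Fintype n₂] [DecidableEq n₂] (K : Matrix (n₁ × n₂) (n₁ × n₂) ℂ) (p a b s : ℝ)
    {A : Matrix (n₁ × n₂) (n₁ × n₂) ℂ} (hA : A.PosDef) (B : Matrix n₂ n₂ ℂ) :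
    Qinf K p (-b) (-a) s A B = sInf {x | ∃ C : Matrix n₂ n₂ ℂ, C.PosDef ∧ C.trace = 1 ∧
      x = trp ((matPow A (p/2) * K) * Ef n₁ (-a) (-b) B C * (matPow A (p/2) * K)ᴴ) s} := by
  unfold Qinf
  rw [Matrix.conjTranspose_mul, matPow_herm hA]
  simp only [trp, Ef, Matrix.mul_assoc]

theorem Q_empty {n₁ n₂ : Type*} [Fintype n₁] [DecidableEq n₁]
    [Fintype n₂] [DecidableEq n₂] [IsEmpty (n₁ × n₂)] (K : Matrix (n₁ × n₂) (n₁ × n₂) ℂ) (p q r s : ℝ)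
    (A : Matrix (n₁ × n₂) (n₁ × n₂) ℂ) (B : Matrix n₂ n₂ ℂ) : Qinf K p q r s A B = 0 := by
  unfold Qinf
  apply le_antisymm
  · apply Real.sInf_nonpos
    rintro x ⟨C, _, _, rfl⟩
    simp [Matrix.trace]
  · apply Real.sInf_nonneg
    rintro x ⟨C, _, _, rfl⟩
    simp [Matrix.trace]

theorem Q_main {n₁ n₂ : Type*} [Fintype n₁] [DecidableEq n₁]
    [Fintype n₂] [DecidableEq n₂] [Nonempty n₁] [Nonempty n₂]
    {K : Matrix (n₁ × n₂) (n₁ × n₂) ℂ} (hK : IsUnit K)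
    {p a b s α : ℝ} (hp : p ∈ Set.Icc (1:ℝ) 2) (ha : 0 < a) (hb : 0 < b) (hab : a + b < 1) (hs : 0 < s)
    (hα : 0 < α) (hαp : 1/p ≤ α) (hα1 : α ≤ 1) (h : 1/α = 1/s + (a+b))
    {A₀ A₁ : Matrix (n₁ × n₂) (n₁ × n₂) ℂ} (hA₀ : A₀.PosDef) (hA₁ : A₁.PosDef)
    {B₀ B₁ : Matrix n₂ n₂ ℂ} (hB₀ : B₀.PosDef) (hB₁ : B₁.PosDef)
    {x y : ℝ} (hx : 0 ≤ x) (hy : 0 ≤ y) (hxy : x + y = 1) :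
    Qinf K p (-b) (-a) s (x • A₀ + y • A₁) (x • B₀ + y • B₁) ≤
      x * Qinf K p (-b) (-a) s A₀ B₀ + y * Qinf K p (-b) (-a) s A₁ B₁ := by
  have hA := posDef_comb hA₀ hA₁ hx hy hxy
  have hB := posDef_comb hB₀ hB₁ hx hy hxy
  rw [Q_eq K p a b s hA, Q_eq K p a b s hA₀, Q_eq K p a b s hA₁]
  have hcard : (0:ℝ) < Fintype.card n₂ := by exact_mod_cast Fintype.card_pos
  have hne : ∀ G : Matrix n₂ n₂ ℂ → ℝ, {z | ∃ C : Matrix n₂ n₂ ℂ, C.PosDef ∧ C.trace = 1 ∧ z = G C}.Nonempty := by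
    intro G
    refine ⟨_, (Fintype.card n₂ : ℝ)⁻¹ • (1 : Matrix n₂ n₂ ℂ), Matrix.PosDef.one.smul (inv_pos.mpr hcard), ?_, rfl⟩
    rw [Matrix.trace_smul, Matrix.trace_one, Complex.real_smul]
    push_cast
    have : (Fintype.card n₂ : ℂ) ≠ 0 := by exact_mod_cast hcard.ne'
    field_simp
  have hLu : IsUnit (matPow (x • A₀ + y • A₁) (p/2) * K) := (matPow_posDef hA _).isUnit.mul hK
  refine le_of_forall_pos_le_add fun ε hε => ?_
  obtain ⟨_, ⟨C₀, hC₀, t₀, rfl⟩, h₀⟩ := Real.lt_sInf_add_pos (hne fun C => trp ((matPow A₀ (p/2) * K) * Ef n₁ (-a) (-b) B₀ C * (matPow A₀ (p/2) * K)ᴴ) s) hε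
  obtain ⟨_, ⟨C₁, hC₁, t₁, rfl⟩, h₁⟩ := Real.lt_sInf_add_pos (hne fun C => trp ((matPow A₁ (p/2) * K) * Ef n₁ (-a) (-b) B₁ C * (matPow A₁ (p/2) * K)ᴴ) s) hε
  have r₀ : rt C₀ = 1 := by rw [rt, t₀, Complex.one_re]
  have r₁ : rt C₁ = 1 := by rw [rt, t₁, Complex.one_re]
  have g₀ := mul_le_mul_of_nonneg_left h₀.le hx
  have g₁ := mul_le_mul_of_nonneg_left h₁.le hy
  set S := sInf {z | ∃ C : Matrix n₂ n₂ ℂ, C.PosDef ∧ C.trace = 1 ∧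
      z = trp ((matPow (x • A₀ + y • A₁) (p/2) * K) * Ef n₁ (-a) (-b) (x • B₀ + y • B₁) C * (matPow (x • A₀ + y • A₁) (p/2) * K)ᴴ) s} with hS
  set R := x * trp ((matPow A₀ (p/2) * K) * Ef n₁ (-a) (-b) B₀ C₀ * (matPow A₀ (p/2) * K)ᴴ) s +
      y * trp ((matPow A₁ (p/2) * K) * Ef n₁ (-a) (-b) B₁ C₁ * (matPow A₁ (p/2) * K)ᴴ) s with hR
  have key : ∀ μ : ℝ, 0 < μ → μ < 1 → μ ^ α * S ≤ R := by
    intro μ hμ hμ1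
    obtain ⟨C, hC, t, hF⟩ := main_mu hK hp ha hb hab hs hα hαp hα1 h hμ hμ1 hA₀ hA₁ hB₀ hB₁ hC₀ hC₁ r₀ r₁ hx hy hxy
    refine le_trans (mul_le_mul_of_nonneg_left ?_ (Real.rpow_pos_of_pos hμ α).le) hF
    refine csInf_le ⟨0, ?_⟩ ⟨C, hC, t, rfl⟩
    rintro _ ⟨C', hC', _, rfl⟩
    exact trp_pos (posDef_mul_mul (Ef_posDef _ _ hB hC') hLu) _
  have hSR : S ≤ R := by
    have hc : Filter.Tendsto (fun μ : ℝ => μ ^ α * S) (nhdsWithin 1 (Set.Iio 1)) (nhds (1 ^ α * S)) := by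
      have : ContinuousAt (fun μ : ℝ => μ ^ α * S) 1 :=
        (Real.continuousAt_rpow_const 1 α (Or.inl one_ne_zero)).mul continuousAt_const
      exact this.tendsto.mono_left nhdsWithin_le_nhds
    rw [Real.one_rpow, one_mul] at hc
    refine le_of_tendsto hc ?_
    filter_upwards [Ioo_mem_nhdsLT (show (0:ℝ) < 1 by norm_num)] with μ hμ
    exact key μ hμ.1 hμ.2
  have : x * ε + y * ε = ε := by rw [← add_mul, hxy, one_mul]
  linarith

/-- joint convexity of `(A,B) ↦ Q(A,B)` for
`1 ≤ p ≤ 2`, `−1 ≤ q,r < 0`, `1+q+r > 0`, `p+q+r > 0` and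
`1/(p+q+r) ≤ s ≤ 1/(1+q+r)`. -/
theorem stmt2 {n₁ n₂ : Type*} [Fintype n₁] [DecidableEq n₁]
    [Fintype n₂] [DecidableEq n₂]
    (K : Matrix (n₁ × n₂) (n₁ × n₂) ℂ) (hK : IsUnit K)
    (p q r s : ℝ) (hp0 : 1 ≤ p) (hp1 : p ≤ 2)
    (hq0 : -1 ≤ q) (hq1 : q < 0) (hr0 : -1 ≤ r) (hr1 : r < 0)
    (hqr : 0 < 1 + q + r) (hpqr : 0 < p + q + r)
    (hs1 : 1 / (p + q + r) ≤ s) (hs2 : s ≤ 1 / (1 + q + r))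
    (A₀ A₁ : Matrix (n₁ × n₂) (n₁ × n₂) ℂ) (hA₀ : A₀.PosDef) (hA₁ : A₁.PosDef)
    (B₀ B₁ : Matrix n₂ n₂ ℂ) (hB₀ : B₀.PosDef) (hB₁ : B₁.PosDef)
    (t : ℝ) (ht0 : 0 ≤ t) (ht1 : t ≤ 1) :
    Qinf K p q r s ((t : ℂ) • A₀ + ((1 - t : ℝ) : ℂ) • A₁)
        ((t : ℂ) • B₀ + ((1 - t : ℝ) : ℂ) • B₁) ≤
      t * Qinf K p q r s A₀ B₀ + (1 - t) * Qinf K p q r s A₁ B₁ := by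
  have cs : ∀ {n : Type _} (c : ℝ) (M : Matrix n n ℂ), (c : ℂ) • M = c • M := by
    intro n c M; ext i j; simp
  have hone : t + (1 - t) = 1 := by ring
  have ht1' : 0 ≤ 1 - t := by linarith
  rcases isEmpty_or_nonempty (n₁ × n₂) with he | hne
  · rw [Q_empty, Q_empty, Q_empty]; simp
  obtain ⟨⟨i₁, i₂⟩⟩ := hne
  have : Nonempty n₁ := ⟨i₁⟩
  have : Nonempty n₂ := ⟨i₂⟩
  have hs : 0 < s := lt_of_lt_of_le (by positivity) hs1
  have hp : 0 < p := by linarith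
  have u1 : 1/s ≤ p + q + r := by
    rw [div_le_iff₀ hpqr] at hs1
    rw [div_le_iff₀ hs]; linarith
  have u2 : 1 + q + r ≤ 1/s := by
    rw [le_div_iff₀ hqr] at hs2
    rw [le_div_iff₀ hs]; linarith
  have hd : 0 < 1/s + (-r + -q) := by linarith
  have := Q_main (α := 1/(1/s + (-r + -q))) hK ⟨hp0, hp1⟩ (show 0 < -r by linarith) (show 0 < -q by linarith) (by linarith) hs
    (by positivity) (one_div_le_one_div_of_le hd (by linarith)) (by rw [div_le_iff₀ hd]; linarith)
    (by rw [one_div_one_div]) hA₀ hA₁ hB₀ hB₁ ht0 ht1' hone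
  rw [neg_neg, neg_neg] at this
  rw [cs, cs]
  have e1 : (t : ℂ) • B₀ = t • B₀ := by ext i j; simp
  have e2 : ((1 - t : ℝ) : ℂ) • B₁ = (1 - t) • B₁ := by ext i j; simp
  rw [e1, e2]
  exact this
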